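/- arXiv:2202.10898 — 4 statements merged into one kernel-verified Lean document; each statement's English description precedes it below -/
import Mathlib

section
/- Let φ be an FOLe formula over the signature R and α an assignment that is total on the free variables of φ. Then for every FOLe interpretation I: I, α ⊨_FOLe φ if and only if ~I, α ⊨_FOL Ω_f(φ), where ~I is the decomposed classical first-order interpretation corresponding to I. Equivalently, since Ω_f is a bijection on formulas, for every classical first-order formula ψ over the decomposed signature ~R: I, α ⊨_FOLe Ω_f⁻¹(ψ) if and only if ~I, α ⊨_FOL ψ. -/
/-! ## Syntax of the relational calculus with null values (FOLe) -/

/-- A relational signature: relation symbols with arities, and constant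
symbols. -/
structure Signature where
  Rel : Type
  arity : Rel → ℕ
  Const : Type

/-- Null-free terms (used as arguments of equality atoms, which may not
mention the null symbol). -/
inductive NTerm (σ : Signature) (V : Type) where
  | const : σ.Const → NTerm σ V
  | var : V → NTerm σ V

/-- Terms of FOLe: constants, variables, and the null symbol `N`. -/
inductive Term (σ : Signature) (V : Type) where
  | const : σ.Const → Term σ V
  | var : V → Term σ V
  | null : Term σ V

/-- Formulas of FOLe: atoms `P(t₁,…,tₙ)`, equalities between non-null terms,
and closure under ¬, ∧, ∨, ∃, ∀ (together with the trivial conditions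
true/false). -/
inductive Formula (σ : Signature) (V : Type) where
  | tru : Formula σ V
  | fls : Formula σ V
  | atom : (P : σ.Rel) → (Fin (σ.arity P) → Term σ V) → Formula σ V
  | eq : NTerm σ V → NTerm σ V → Formula σ V
  | not : Formula σ V → Formula σ V
  | and : Formula σ V → Formula σ V → Formula σ V
  | or : Formula σ V → Formula σ V → Formula σ V
  | ex : V → Formula σ V → Formula σ V
  | all : V → Formula σ V → Formula σ V

/-! ## Semantics -/

/-- An FOLe interpretation: a nonempty domain, interpretations of the
constants, and for each `n`-ary relation symbol a set of *partial* `n`-tuples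
(partial functions `{1,…,n} → Δ`, encoded as `Fin n → Option Δ`). -/
structure Interp (σ : Signature) where
  Dom : Type
  nonempty : Nonempty Dom
  constInterp : σ.Const → Dom
  relInterp : (P : σ.Rel) → Set (Fin (σ.arity P) → Option Dom)

variable {σ : Signature} {V : Type}

/-- The (possibly undefined) value of a term under a partial assignment:
`N` and unassigned variables have undefined value. -/
def Term.val (I : Interp σ) (α : V → Option I.Dom) : Term σ V → Option I.Dom
  | .const c => some (I.constInterp c)
  | .var x => α x
  | .null => none

/-- The value of a null-free term. -/
def NTerm.val (I : Interp σ) (α : V → Option I.Dom) : NTerm σ V → Option I.Dom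
  | .const c => some (I.constInterp c)
  | .var x => α x

/-- FOLe satisfaction: an atom holds iff the partial tuple of the defined
term values belongs to the relation's interpretation; equality requires both
values defined and equal; connectives and quantifiers (over the domain) are
classical. -/
def Formula.Sat [DecidableEq V] (I : Interp σ) :
    (V → Option I.Dom) → Formula σ V → Prop
  | _, .tru => True
  | _, .fls => False
  | α, .atom P ts => (fun i => (ts i).val I α) ∈ I.relInterp P
  | α, .eq t₁ t₂ => ∃ d : I.Dom, t₁.val I α = some d ∧ t₂.val I α = some d
  | α, .not φ => ¬ Formula.Sat I α φ
  | α, .and φ ψ => Formula.Sat I α φ ∧ Formula.Sat I α ψ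
  | α, .or φ ψ => Formula.Sat I α φ ∨ Formula.Sat I α ψ
  | α, .ex x φ => ∃ d : I.Dom, Formula.Sat I (fun y => if y = x then some d else α y) φ
  | α, .all x φ => ∀ d : I.Dom, Formula.Sat I (fun y => if y = x then some d else α y) φ

/-! ## Free variables, safe range -/

/-- Variables of a term. -/
def Term.vars [DecidableEq V] : Term σ V → Finset V
  | .var x => {x}
  | _ => ∅

/-- Variables of a null-free term. -/
def NTerm.vars [DecidableEq V] : NTerm σ V → Finset V
  | .var x => {x}
  | _ => ∅

/-- Free variables of a formula. -/
def Formula.freeVars [DecidableEq V] : Formula σ V → Finset V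
  | .tru | .fls => ∅
  | .atom _ ts => Finset.univ.biUnion fun i => (ts i).vars
  | .eq t₁ t₂ => t₁.vars ∪ t₂.vars
  | .not φ => φ.freeVars
  | .and φ ψ | .or φ ψ => φ.freeVars ∪ ψ.freeVars
  | .ex x φ | .all x φ => φ.freeVars.erase x

/-- The range restriction of a formula (`none` = undefined), computed by the
standard syntactic rules. -/
def Formula.rr [DecidableEq V] : Formula σ V → Option (Finset V)
  | .tru | .fls => some ∅
  | .atom _ ts => some (Finset.univ.biUnion fun i => (ts i).vars)
  | .eq (.var x) (.const _) => some {x}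
  | .eq (.const _) (.var y) => some {y}
  | .eq _ _ => some ∅
  | .not φ => φ.rr.map fun _ => ∅
  | .and φ ψ => do pure ((← φ.rr) ∪ (← ψ.rr))
  | .or φ ψ => do pure ((← φ.rr) ∩ (← ψ.rr))
  | .ex x φ => φ.rr.bind fun s => if x ∈ s then some (s.erase x) else none
  | .all _ _ => none

/-- A formula is safe-range if its range restriction is defined and equals its
set of free variables. -/
def Formula.SafeRange [DecidableEq V] (φ : Formula σ V) : Prop :=
  φ.rr = some φ.freeVars

/-- A formula is null-free if the null symbol `N` does not occur in it. -/
def Term.NullFree : Term σ V → Prop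
  | .null => False
  | _ => True

def Formula.NullFree : Formula σ V → Prop
  | .atom _ ts => ∀ i, (ts i).NullFree
  | .not φ => φ.NullFree
  | .and φ ψ | .or φ ψ => φ.NullFree ∧ ψ.NullFree
  | .ex _ φ | .all _ φ => φ.NullFree
  | _ => True

/-! ## Classical first-order interpretations (total tuples) -/

/-- A classical first-order interpretation: each `n`-ary relation symbol is
interpreted as a set of *total* `n`-tuples. -/
structure CInterp (σ : Signature) where
  Dom : Type
  nonempty : Nonempty Dom
  constInterp : σ.Const → Dom
  relInterp : (P : σ.Rel) → Set (Fin (σ.arity P) → Dom)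

/-- Value of a term in a classical interpretation (under a possibly partial
assignment). -/
def CInterp.termVal {σ : Signature} {V : Type} (I : CInterp σ)
    (α : V → Option I.Dom) : Term σ V → Option I.Dom
  | .const c => some (I.constInterp c)
  | .var x => α x
  | .null => none

def CInterp.ntermVal {σ : Signature} {V : Type} (I : CInterp σ)
    (α : V → Option I.Dom) : NTerm σ V → Option I.Dom
  | .const c => some (I.constInterp c)
  | .var x => α x

/-- Classical first-order satisfaction: an atom `P(t₁,…,tₙ)` is satisfied iff
the tuple of the term values (all of which must be defined) belongs to the
interpretation of `P`; the rest is classical. -/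
def CInterp.Sat {σ : Signature} {V : Type} [DecidableEq V] (I : CInterp σ) :
    (V → Option I.Dom) → Formula σ V → Prop
  | _, .tru => True
  | _, .fls => False
  | α, .atom P ts => ∃ f ∈ I.relInterp P, ∀ i, I.termVal α (ts i) = some (f i)
  | α, .eq t₁ t₂ => ∃ d : I.Dom, I.ntermVal α t₁ = some d ∧ I.ntermVal α t₂ = some d
  | α, .not φ => ¬ CInterp.Sat I α φ
  | α, .and φ ψ => CInterp.Sat I α φ ∧ CInterp.Sat I α ψ
  | α, .or φ ψ => CInterp.Sat I α φ ∨ CInterp.Sat I α ψ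
  | α, .ex x φ => ∃ d : I.Dom, CInterp.Sat I (fun y => if y = x then some d else α y) φ
  | α, .all x φ => ∀ d : I.Dom, CInterp.Sat I (fun y => if y = x then some d else α y) φ

/-! ## The decomposed signature and the translation `Ω_f` -/

/-- The decomposed signature `~R`: for each relation symbol `P` of arity `n`
and each subset `A ⊆ {1,…,n}` of its positions, a predicate `~P_A` of arity
`|A|`; constants are unchanged. -/
def decompSig (σ : Signature) : Signature where
  Rel := Σ P : σ.Rel, Finset (Fin (σ.arity P))
  arity := fun PA => PA.2.card
  Const := σ.Const

/-- Transport of terms along the (identical) constants of the decomposed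
signature. -/
def Term.toD {σ : Signature} {V : Type} : Term σ V → Term (decompSig σ) V
  | .const c => .const c
  | .var x => .var x
  | .null => .null

def NTerm.toD {σ : Signature} {V : Type} : NTerm σ V → NTerm (decompSig σ) V
  | .const c => .const c
  | .var x => .var x

def Term.ofD {σ : Signature} {V : Type} : Term (decompSig σ) V → Term σ V
  | .const c => .const c
  | .var x => .var x
  | .null => .null

def NTerm.ofD {σ : Signature} {V : Type} : NTerm (decompSig σ) V → NTerm σ V
  | .const c => .const c
  | .var x => .var x

/-- Whether a term is the null symbol. -/
def Term.isNull {σ : Signature} {V : Type} : Term σ V → Bool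
  | .null => true
  | _ => false

/-- The decomposed classical interpretation `~I` of an FOLe interpretation
`I`: same domain and constants; `~P_A` is interpreted as the set of total
`|A|`-tuples listing, in ascending positional order, the values of those
partial tuples of `P^I` whose domain of definition is exactly `A`. -/
def decompInterp {σ : Signature} (I : Interp σ) : CInterp (decompSig σ) where
  Dom := I.Dom
  nonempty := I.nonempty
  constInterp := I.constInterp
  relInterp := fun PA =>
    { f | ∃ τ ∈ I.relInterp PA.1, (∀ j, τ j ≠ none ↔ j ∈ PA.2) ∧
        ∀ i, τ ↑(PA.2.orderIsoOfFin rfl i) = some (f i) }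

/-- The bijective translation `Ω_f` from FOLe formulas over `σ` to classical
formulas over the decomposed signature: an atom `P(t₁,…,tₙ)` is mapped to
`~P_A(t_{i₁},…,t_{i_k})` where `A = {i₁ < … < i_k}` is the set of positions
holding non-null terms; `Ω_f` is the identity on equality atoms and commutes
with the connectives and quantifiers. -/
def omegaF {σ : Signature} {V : Type} : Formula σ V → Formula (decompSig σ) V
  | .tru => .tru
  | .fls => .fls
  | .atom P ts =>
      let A : Finset (Fin (σ.arity P)) :=
        Finset.univ.filter fun j => (ts j).isNull = false
      .atom ⟨P, A⟩ (fun i => (ts ↑(A.orderIsoOfFin rfl i)).toD)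
  | .eq t₁ t₂ => .eq t₁.toD t₂.toD
  | .not φ => .not (omegaF φ)
  | .and φ ψ => .and (omegaF φ) (omegaF ψ)
  | .or φ ψ => .or (omegaF φ) (omegaF ψ)
  | .ex x φ => .ex x (omegaF φ)
  | .all x φ => .all x (omegaF φ)

/-- The inverse translation `Ω_f⁻¹`: an atom `~P_A(t_{i₁},…,t_{i_k})` is
mapped back to the `P`-atom holding the given terms at the positions of `A`
(in ascending order) and the null symbol elsewhere. -/
def omegaFInv {σ : Signature} {V : Type} : Formula (decompSig σ) V → Formula σ V
  | .tru => .tru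
  | .fls => .fls
  | .atom PA args =>
      .atom PA.1 (fun j =>
        if h : j ∈ PA.2 then (args ((PA.2.orderIsoOfFin rfl).symm ⟨j, h⟩)).ofD
        else .null)
  | .eq t₁ t₂ => .eq t₁.ofD t₂.ofD
  | .not φ => .not (omegaFInv φ)
  | .and φ ψ => .and (omegaFInv φ) (omegaFInv ψ)
  | .or φ ψ => .or (omegaFInv φ) (omegaFInv ψ)
  | .ex x φ => .ex x (omegaFInv φ)
  | .all x φ => .all x (omegaFInv φ)

theorem atom_aux {n : ℕ} {D : Type} (R : Set (Fin n → Option D)) (A : Finset (Fin n))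
    (t : Fin n → Option D) (ht : ∀ j, t j ≠ none ↔ j ∈ A) :
    t ∈ R ↔ ∃ f : Fin A.card → D, (∃ τ ∈ R, (∀ j, τ j ≠ none ↔ j ∈ A) ∧
        ∀ i, τ ↑(A.orderIsoOfFin rfl i) = some (f i)) ∧
        ∀ i, t ↑(A.orderIsoOfFin rfl i) = some (f i) := by
  constructor
  · intro h
    have hex : ∀ i, ∃ d, t ↑(A.orderIsoOfFin rfl i) = some d := fun i =>
      Option.ne_none_iff_exists'.mp ((ht _).2 (A.orderIsoOfFin rfl i).2)
    choose f hf using hex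
    exact ⟨f, ⟨t, h, ht, hf⟩, hf⟩
  · rintro ⟨f, ⟨τ, hτ, hA, h1⟩, h2⟩
    have : t = τ := by
      funext j
      by_cases hj : j ∈ A
      · obtain ⟨i, hi⟩ := (A.orderIsoOfFin rfl).surjective ⟨j, hj⟩
        have e1 := h1 i
        have e2 := h2 i
        rw [hi] at e1 e2
        exact e2.trans e1.symm
      · have a1 : t j = none := by
          by_contra h
          exact hj ((ht j).1 h)
        have a2 : τ j = none := by
          by_contra h
          exact hj ((hA j).1 h)
        rw [a1, a2]
    rw [this]
    exact hτ

theorem termVal_toD {σ : Signature} {V : Type} (I : Interp σ) (α : V → Option I.Dom)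
    (t : Term σ V) : (decompInterp I).termVal α t.toD = t.val I α := by
  cases t <;> rfl

theorem termVal_ofD {σ : Signature} {V : Type} (I : Interp σ) (α : V → Option I.Dom)
    (t : Term (decompSig σ) V) : (decompInterp I).termVal α t = t.ofD.val I α := by
  cases t <;> rfl

theorem ntermVal_toD {σ : Signature} {V : Type} (I : Interp σ) (α : V → Option I.Dom)
    (t : NTerm σ V) : (decompInterp I).ntermVal α t.toD = t.val I α := by
  cases t <;> rfl

theorem ntermVal_ofD {σ : Signature} {V : Type} (I : Interp σ) (α : V → Option I.Dom)
    (t : NTerm (decompSig σ) V) : (decompInterp I).ntermVal α t = t.ofD.val I α := by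
  cases t <;> rfl

theorem upd_total {V D : Type} [DecidableEq V] (s : Finset V) (x : V) (α : V → Option D)
    (h : ∀ y ∈ s.erase x, (α y).isSome) (d : D) :
    ∀ y ∈ s, ((fun y => if y = x then some d else α y) y).isSome := by
  intro y hy
  by_cases e : y = x
  · simp [e]
  · simpa [e] using h y (Finset.mem_erase.2 ⟨e, hy⟩)

/-- Correctness of the translation `Ω_f`: for every FOLe formula `φ` and every
assignment `α` total on the free variables of `φ`, `I, α ⊨_FOLe φ` iff
`~I, α ⊨_FOL Ω_f(φ)`; and conversely, for every (null-free) classical formula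
`ψ` over the decomposed signature and every assignment total on its free
variables, `I, α ⊨_FOLe Ω_f⁻¹(ψ)` iff `~I, α ⊨_FOL ψ`. -/
theorem omegaF_correct {σ : Signature} {V : Type} [DecidableEq V]
    (I : Interp σ) :
    (∀ (φ : Formula σ V) (α : V → Option I.Dom),
      (∀ x ∈ φ.freeVars, (α x).isSome) →
      (Formula.Sat I α φ ↔ CInterp.Sat (decompInterp I) α (omegaF φ))) ∧
    (∀ (ψ : Formula (decompSig σ) V) (α : V → Option I.Dom),
      ψ.NullFree →
      (∀ x ∈ ψ.freeVars, (α x).isSome) →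
      (Formula.Sat I α (omegaFInv ψ) ↔ CInterp.Sat (decompInterp I) α ψ)) := by
  constructor
  · intro φ
    induction φ with
    | tru => intro α _; exact Iff.rfl
    | fls => intro α _; exact Iff.rfl
    | atom P ts =>
      intro α h
      have key := atom_aux (I.relInterp P)
        (Finset.univ.filter fun j => (ts j).isNull = false)
        (fun i => (ts i).val I α) (by
          intro j
          have hj : ∀ x ∈ (ts j).vars, (α x).isSome := fun x hx =>
            h x (Finset.mem_biUnion.2 ⟨j, Finset.mem_univ j, hx⟩)
          simp only [Finset.mem_filter, Finset.mem_univ, true_and]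
          cases hc : ts j with
          | const c => simp [Term.val, Term.isNull]
          | null => simp [Term.val, Term.isNull]
          | var x =>
            rw [hc] at hj
            have := hj x (by simp [Term.vars])
            simpa [Term.val, Term.isNull, Option.isSome_iff_ne_none] using this)
      refine key.trans (exists_congr fun f => and_congr Iff.rfl (forall_congr' fun i => ?_))
      exact (Eq.congr_left (termVal_toD I α _)).symm
    | eq t₁ t₂ =>
      intro α _
      refine exists_congr fun d => and_congr ?_ ?_
      · exact (Eq.congr_left (ntermVal_toD I α t₁)).symm
      · exact (Eq.congr_left (ntermVal_toD I α t₂)).symm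
    | not φ ih => intro α h; exact not_congr (ih α h)
    | and φ ψ ih1 ih2 =>
      intro α h
      exact and_congr (ih1 α fun x hx => h x (Finset.mem_union_left _ hx))
        (ih2 α fun x hx => h x (Finset.mem_union_right _ hx))
    | or φ ψ ih1 ih2 =>
      intro α h
      exact or_congr (ih1 α fun x hx => h x (Finset.mem_union_left _ hx))
        (ih2 α fun x hx => h x (Finset.mem_union_right _ hx))
    | ex x φ ih =>
      intro α h
      exact exists_congr fun d => ih _ (upd_total _ x α h d)
    | all x φ ih =>
      intro α h
      exact forall_congr' fun d => ih _ (upd_total _ x α h d)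
  · intro φ
    induction φ with
    | tru => intro α _ _; exact Iff.rfl
    | fls => intro α _ _; exact Iff.rfl
    | atom PA ts =>
      intro α hn h
      obtain ⟨P, A⟩ := PA
      have key := atom_aux (I.relInterp P) A
        (fun j => Term.val I α (if h : j ∈ A then
          (ts ((A.orderIsoOfFin rfl).symm ⟨j, h⟩)).ofD else .null)) (by
          intro j
          by_cases hjA : j ∈ A
          · simp only [hjA, dif_pos, iff_true]
            generalize (A.orderIsoOfFin rfl).symm ⟨j, hjA⟩ = k
            have hk : ∀ x ∈ (ts k).vars, (α x).isSome := fun x hx =>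
              h x (Finset.mem_biUnion.2 ⟨k, Finset.mem_univ k, hx⟩)
            have hnk : (ts k).NullFree := hn k
            cases hc : ts k with
            | const c => simp [Term.val, Term.ofD]
            | null => rw [hc] at hnk; exact hnk.elim
            | var x =>
              rw [hc] at hk
              have := hk x (by simp [Term.vars])
              simpa [Term.val, Term.ofD, Option.isSome_iff_ne_none] using this
          · simp [hjA, Term.val])
      refine key.trans (exists_congr fun f => and_congr Iff.rfl (forall_congr' fun i => ?_))
      refine Eq.congr_left ?_
      refine Eq.trans ?_ (termVal_ofD I α (ts i)).symm
      have hm := (A.orderIsoOfFin rfl i).2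
      simp only [hm, dif_pos, Subtype.coe_eta, OrderIso.symm_apply_apply]
    | eq t₁ t₂ =>
      intro α _ _
      refine exists_congr fun d => and_congr ?_ ?_
      · exact (Eq.congr_left (ntermVal_ofD I α t₁)).symm
      · exact (Eq.congr_left (ntermVal_ofD I α t₂)).symm
    | not φ ih => intro α hn h; exact not_congr (ih α hn h)
    | and φ ψ ih1 ih2 =>
      intro α hn h
      exact and_congr (ih1 α hn.1 fun x hx => h x (Finset.mem_union_left _ hx))
        (ih2 α hn.2 fun x hx => h x (Finset.mem_union_right _ hx))
    | or φ ψ ih1 ih2 =>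
      intro α hn h
      exact or_congr (ih1 α hn.1 fun x hx => h x (Finset.mem_union_left _ hx))
        (ih2 α hn.2 fun x hx => h x (Finset.mem_union_right _ hx))
    | ex x φ ih =>
      intro α hn h
      exact exists_congr fun d => ih _ hn (upd_total _ x α h d)
    | all x φ ih =>
      intro α hn h
      exact forall_congr' fun d => ih _ hn (upd_total _ x α h d)
end

section
/- Every safe-range closed FOLe formula is domain independent, and conversely every domain independent closed FOLe formula is logically equivalent to a safe-range closed FOLe formula. -/
variable {σ : Signature} {V : Type}

/-! ## Set-based FOLe interpretations (domains as subsets of an ambient type,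
so that interpretations over different domains can share their relation and
constant interpretations) -/

structure SInterp (σ : Signature) (U : Type) where
  Dom : Set U
  nonempty : Dom.Nonempty
  constInterp : σ.Const → U
  const_mem : ∀ c, constInterp c ∈ Dom
  relInterp : (P : σ.Rel) → Set (Fin (σ.arity P) → Option U)
  rel_mem : ∀ P τ, τ ∈ relInterp P → ∀ i d, τ i = some d → d ∈ Dom

/-- Value of a term (partial: `N` and unassigned variables are undefined). -/
def SInterp.termVal {σ : Signature} {V U : Type} (I : SInterp σ U)
    (α : V → Option U) : Term σ V → Option U
  | .const c => some (I.constInterp c)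
  | .var x => α x
  | .null => none

def SInterp.ntermVal {σ : Signature} {V U : Type} (I : SInterp σ U)
    (α : V → Option U) : NTerm σ V → Option U
  | .const c => some (I.constInterp c)
  | .var x => α x

/-- FOLe satisfaction, with quantifiers ranging over the domain of the
interpretation. -/
def SInterp.Sat {σ : Signature} {V U : Type} [DecidableEq V] (I : SInterp σ U) :
    (V → Option U) → Formula σ V → Prop
  | _, .tru => True
  | _, .fls => False
  | α, .atom P ts => (fun i => I.termVal α (ts i)) ∈ I.relInterp P
  | α, .eq t₁ t₂ => ∃ d : U, I.ntermVal α t₁ = some d ∧ I.ntermVal α t₂ = some d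
  | α, .not φ => ¬ SInterp.Sat I α φ
  | α, .and φ ψ => SInterp.Sat I α φ ∧ SInterp.Sat I α ψ
  | α, .or φ ψ => SInterp.Sat I α φ ∨ SInterp.Sat I α ψ
  | α, .ex x φ => ∃ d ∈ I.Dom, SInterp.Sat I (fun y => if y = x then some d else α y) φ
  | α, .all x φ => ∀ d ∈ I.Dom, SInterp.Sat I (fun y => if y = x then some d else α y) φ

/-- A closed FOLe formula is domain independent if any two interpretations
that agree on the interpretation of all relation symbols and constant symbols,
but have possibly different domains, agree on its truth value. -/
def DomIndep {σ : Signature} {V : Type} [DecidableEq V] (φ : Formula σ V) : Prop :=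
  ∀ (U : Type) (I J : SInterp σ U),
    I.constInterp = J.constInterp → I.relInterp = J.relInterp →
    (SInterp.Sat I (fun _ => none) φ ↔ SInterp.Sat J (fun _ => none) φ)

namespace FOLeAux

/-! ## Safe-range formulas are domain independent -/

theorem rr_mem {σ : Signature} {U : Type} (I J : SInterp σ U)
    (hc : I.constInterp = J.constInterp) (hr : I.relInterp = J.relInterp)
    (φ : Formula σ ℕ) : ∀ (s : Finset ℕ) (α : ℕ → Option U), φ.rr = some s →
      SInterp.Sat I α φ → ∀ x ∈ s, ∀ d, α x = some d → d ∈ J.Dom := by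
  induction φ with
  | tru => intro s α h _ x hx; simp only [Formula.rr, Option.some.injEq] at h; subst h; simp at hx
  | fls => intro s α h hs; exact absurd hs (by simp [SInterp.Sat])
  | atom P ts =>
    intro s α h hs x hx d hd
    simp only [Formula.rr, Option.some.injEq] at h
    subst h
    simp only [Finset.mem_biUnion, Finset.mem_univ, true_and] at hx
    obtain ⟨i, hi⟩ := hx
    simp only [SInterp.Sat, hr] at hs
    refine J.rel_mem P _ hs i d ?_
    cases h : ts i with
    | const c => simp [h, Term.vars] at hi
    | null => simp [h, Term.vars] at hi
    | var y =>
      simp only [h, Term.vars, Finset.mem_singleton] at hi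
      subst hi
      simpa [h, SInterp.termVal] using hd
  | eq t₁ t₂ =>
    intro s α h hs x hx d hd
    obtain ⟨e, h1, h2⟩ := hs
    cases t₁ <;> cases t₂ <;> simp only [Formula.rr, Option.some.injEq] at h <;> subst h <;>
      simp only [Finset.mem_singleton, Finset.notMem_empty] at hx
    · subst hx
      simp only [SInterp.ntermVal, Option.some.injEq] at h1 h2
      rw [hd] at h2
      have : d = e := by simpa using h2
      rw [this, ← h1, hc]
      exact J.const_mem _
    · subst hx
      simp only [SInterp.ntermVal, Option.some.injEq] at h1 h2
      rw [hd] at h1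
      have : d = e := by simpa using h1
      rw [this, ← h2, hc]
      exact J.const_mem _
  | not φ ih =>
    intro s α h hs x hx
    simp only [Formula.rr, Option.map_eq_some_iff] at h
    obtain ⟨_, _, rfl⟩ := h
    simp at hx
  | and φ ψ ih1 ih2 =>
    intro s α h hs x hx d hd
    cases h1 : φ.rr with
    | none => simp [Formula.rr, h1] at h
    | some s1 =>
      cases h2 : ψ.rr with
      | none => simp [Formula.rr, h1, h2] at h
      | some s2 =>
        simp [Formula.rr, h1, h2] at h
        subst h
        rcases Finset.mem_union.1 hx with hx | hx
        · exact ih1 s1 α h1 hs.1 x hx d hd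
        · exact ih2 s2 α h2 hs.2 x hx d hd
  | or φ ψ ih1 ih2 =>
    intro s α h hs x hx d hd
    cases h1 : φ.rr with
    | none => simp [Formula.rr, h1] at h
    | some s1 =>
      cases h2 : ψ.rr with
      | none => simp [Formula.rr, h1, h2] at h
      | some s2 =>
        simp [Formula.rr, h1, h2] at h
        subst h
        rcases hs with hs | hs
        · exact ih1 s1 α h1 hs x (Finset.mem_inter.1 hx).1 d hd
        · exact ih2 s2 α h2 hs x (Finset.mem_inter.1 hx).2 d hd
  | ex y φ ih =>
    intro s α h hs x hx d hd
    simp only [Formula.rr, Option.bind_eq_some_iff] at h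
    obtain ⟨s', h1, h2⟩ := h
    split_ifs at h2 with hy
    simp only [Option.some.injEq] at h2
    subst h2
    obtain ⟨e, _, hs⟩ := hs
    have hx' := Finset.mem_erase.1 hx
    exact ih s' _ h1 hs x hx'.2 d (by simp [hx'.1, hd])
  | all y φ ih => intro s α h; simp [Formula.rr] at h

theorem rr_sat {σ : Signature} {U : Type} 
    (φ : Formula σ ℕ) : ∀ (s : Finset ℕ), φ.rr = some s → ∀ (I J : SInterp σ U)
    (_ : I.constInterp = J.constInterp) (_ : I.relInterp = J.relInterp) (α : ℕ → Option U),
      SInterp.Sat I α φ → SInterp.Sat J α φ := by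
  induction φ with
  | tru => intros; trivial
  | fls => intro _ _ _ _ _ _ _ h; exact h
  | atom P ts =>
    intro s _ I J hc hr α h
    simp only [SInterp.Sat] at h ⊢
    rw [← hr]
    convert h using 2 with i
    cases ts i <;> simp [SInterp.termVal, hc]
  | eq t₁ t₂ =>
    intro s _ I J hc hr α h
    simp only [SInterp.Sat] at h ⊢
    cases t₁ <;> cases t₂ <;> simpa [SInterp.ntermVal, hc] using h
  | not φ ih =>
    intro s h I J hc hr α hs hJ
    simp only [Formula.rr, Option.map_eq_some_iff] at h
    obtain ⟨s', h1, _⟩ := h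
    exact hs (ih s' h1 J I hc.symm hr.symm α hJ)
  | and φ ψ ih1 ih2 =>
    intro s h I J hc hr α hs
    cases h1 : φ.rr with
    | none => simp [Formula.rr, h1] at h
    | some s1 =>
      cases h2 : ψ.rr with
      | none => simp [Formula.rr, h1, h2] at h
      | some s2 => exact ⟨ih1 s1 h1 I J hc hr α hs.1, ih2 s2 h2 I J hc hr α hs.2⟩
  | or φ ψ ih1 ih2 =>
    intro s h I J hc hr α hs
    cases h1 : φ.rr with
    | none => simp [Formula.rr, h1] at h
    | some s1 =>
      cases h2 : ψ.rr with
      | none => simp [Formula.rr, h1, h2] at h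
      | some s2 =>
        exact hs.imp (ih1 s1 h1 I J hc hr α) (ih2 s2 h2 I J hc hr α)
  | ex y φ ih =>
    intro s h I J hc hr α hs
    simp only [Formula.rr, Option.bind_eq_some_iff] at h
    obtain ⟨s', h1, h2⟩ := h
    split_ifs at h2 with hy
    obtain ⟨e, _, hs⟩ := hs
    exact ⟨e, rr_mem I J hc hr φ s' _ h1 hs y hy e (by simp), ih s' h1 I J hc hr _ hs⟩
  | all y φ ih => intro s h; simp [Formula.rr] at h

/-! ## Symbols occurring in a formula and the active domain -/

/-- The constants of a term. -/
def tconsts {σ : Signature} : Term σ ℕ → List σ.Const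
  | .const c => [c]
  | _ => []

/-- The constants of a null-free term. -/
def nconsts {σ : Signature} : NTerm σ ℕ → List σ.Const
  | .const c => [c]
  | _ => []

/-- The constants of a formula. -/
def consts {σ : Signature} : Formula σ ℕ → List σ.Const
  | .tru | .fls => []
  | .atom P ts => (List.finRange (σ.arity P)).flatMap fun i => tconsts (ts i)
  | .eq t₁ t₂ => nconsts t₁ ++ nconsts t₂
  | .not φ => consts φ
  | .and φ ψ | .or φ ψ => consts φ ++ consts ψ
  | .ex _ φ | .all _ φ => consts φ

/-- The relation symbols of a formula. -/
def rels {σ : Signature} : Formula σ ℕ → List σ.Rel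
  | .tru | .fls | .eq _ _ => []
  | .atom P _ => [P]
  | .not φ => rels φ
  | .and φ ψ | .or φ ψ => rels φ ++ rels ψ
  | .ex _ φ | .all _ φ => rels φ

/-- The active domain with respect to finitely many symbols. -/
def adom {σ : Signature} {U : Type} (R : List σ.Rel) (C : List σ.Const) (I : SInterp σ U) :
    Set U :=
  {d | (∃ c ∈ C, I.constInterp c = d) ∨
    ∃ P ∈ R, ∃ τ ∈ I.relInterp P, ∃ i, τ i = some d}

theorem adom_sub {σ : Signature} {U : Type} (R : List σ.Rel) (C : List σ.Const)
    (I : SInterp σ U) : adom R C I ⊆ I.Dom := by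
  rintro d (⟨c, _, rfl⟩ | ⟨P, _, τ, hτ, i, hi⟩)
  · exact I.const_mem c
  · exact I.rel_mem P τ hτ i d hi

/-- Agreement of two interpretations on finitely many symbols. -/
def Agree {σ : Signature} {U : Type} (R : List σ.Rel) (C : List σ.Const)
    (I J : SInterp σ U) : Prop :=
  (∀ c ∈ C, I.constInterp c = J.constInterp c) ∧ ∀ P ∈ R, I.relInterp P = J.relInterp P

theorem sat_atom_agree {σ : Signature} {U : Type} {R : List σ.Rel} {C : List σ.Const}
    {I J : SInterp σ U} (h : Agree R C I J) (P : σ.Rel) (ts) (α : ℕ → Option U)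
    (hR : rels (.atom P ts) ⊆ R) (hC : consts (.atom P ts) ⊆ C) :
    SInterp.Sat I α (.atom P ts) ↔ SInterp.Sat J α (.atom P ts) := by
  have : (fun i => I.termVal α (ts i)) = fun i => J.termVal α (ts i) := by
    funext i
    cases hi : ts i with
    | const c =>
      have : c ∈ C := hC (by
        simp only [consts, List.mem_flatMap]
        exact ⟨i, by simp, by simp [hi, tconsts]⟩)
      simp [SInterp.termVal, h.1 c this]
    | var x => rfl
    | null => rfl
  simp only [SInterp.Sat, this, h.2 P (hR (by simp [rels]))]

theorem sat_eq_agree {σ : Signature} {U : Type} {R : List σ.Rel} {C : List σ.Const}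
    {I J : SInterp σ U} (h : Agree R C I J) (t₁ t₂ : NTerm σ ℕ) (α : ℕ → Option U)
    (hC : consts (.eq t₁ t₂) ⊆ C) :
    SInterp.Sat I α (.eq t₁ t₂) ↔ SInterp.Sat J α (.eq t₁ t₂) := by
  have key : ∀ t : NTerm σ ℕ, nconsts t ⊆ C → I.ntermVal α t = J.ntermVal α t := by
    intro t ht
    cases t with
    | const c => simp [SInterp.ntermVal, h.1 c (ht (by simp [nconsts]))]
    | var x => rfl
  simp only [consts, List.append_subset] at hC
  simp only [SInterp.Sat, key t₁ hC.1, key t₂ hC.2]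

theorem sat_agree {σ : Signature} {U : Type} {R : List σ.Rel} {C : List σ.Const}
    {I J : SInterp σ U} (h : Agree R C I J) (hD : I.Dom = J.Dom) (φ : Formula σ ℕ) :
    rels φ ⊆ R → consts φ ⊆ C → ∀ (α : ℕ → Option U),
    (SInterp.Sat I α φ ↔ SInterp.Sat J α φ) := by
  induction φ with
  | tru => intros; rfl
  | fls => intros; rfl
  | atom P ts => intro hR hC α; exact sat_atom_agree h P ts α hR hC
  | eq t₁ t₂ => intro hR hC α; exact sat_eq_agree h t₁ t₂ α hC
  | not φ ih => intro hR hC α; simp only [SInterp.Sat, ih hR hC]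
  | and φ ψ ih1 ih2 =>
    intro hR hC α
    simp only [rels, consts, List.append_subset] at hR hC
    simp only [SInterp.Sat, ih1 hR.1 hC.1, ih2 hR.2 hC.2]
  | or φ ψ ih1 ih2 =>
    intro hR hC α
    simp only [rels, consts, List.append_subset] at hR hC
    simp only [SInterp.Sat, ih1 hR.1 hC.1, ih2 hR.2 hC.2]
  | ex x φ ih => intro hR hC α; simp only [SInterp.Sat, ih hR hC, hD]
  | all x φ ih => intro hR hC α; simp only [SInterp.Sat, ih hR hC, hD]

/-! ## Finite disjunctions and blocks of existential quantifiers -/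

/-- Finite disjunction. -/
def disj {σ : Signature} : List (Formula σ ℕ) → Formula σ ℕ
  | [] => .fls
  | φ :: l => .or φ (disj l)

theorem sat_disj {σ : Signature} {U : Type} (I : SInterp σ U) (α : ℕ → Option U)
    (l : List (Formula σ ℕ)) : SInterp.Sat I α (disj l) ↔ ∃ φ ∈ l, SInterp.Sat I α φ := by
  induction l with
  | nil => simp [disj, SInterp.Sat]
  | cons a l ih => simp [disj, SInterp.Sat, ih]

theorem rr_disj {σ : Signature} (l : List (Formula σ ℕ)) (h : ∀ φ ∈ l, ∃ s, φ.rr = some s) :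
    ∃ s, (disj l).rr = some s := by
  induction l with
  | nil => exact ⟨∅, rfl⟩
  | cons a l ih =>
    obtain ⟨s, hs⟩ := ih fun φ hφ => h φ (by simp [hφ])
    obtain ⟨t, ht⟩ := h a (by simp)
    exact ⟨t ∩ s, by simp [disj, Formula.rr, hs, ht]⟩

theorem fv_disj {σ : Signature} (l : List (Formula σ ℕ)) (s : Finset ℕ)
    (h : ∀ φ ∈ l, φ.freeVars ⊆ s) : (disj l).freeVars ⊆ s := by
  induction l with
  | nil => simp [disj, Formula.freeVars]
  | cons a l ih =>
    simp only [disj, Formula.freeVars]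
    exact Finset.union_subset (h a (by simp)) (ih fun φ hφ => h φ (by simp [hφ]))

/-- Block of existential quantifiers. -/
def exs {σ : Signature} : List ℕ → Formula σ ℕ → Formula σ ℕ
  | [], φ => φ
  | y :: l, φ => .ex y (exs l φ)

theorem sat_exs {σ : Signature} {U : Type} (I : SInterp σ U) (l : List ℕ) (φ : Formula σ ℕ) :
    ∀ α : ℕ → Option U, SInterp.Sat I α (exs l φ) ↔
      ∃ β : ℕ → Option U, (∀ y, y ∉ l → β y = α y) ∧ (∀ y ∈ l, ∃ d ∈ I.Dom, β y = some d) ∧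
        SInterp.Sat I β φ := by
  induction l with
  | nil =>
    intro α
    constructor
    · intro h; exact ⟨α, by simp, by simp, h⟩
    · rintro ⟨β, h1, _, h⟩
      have : β = α := funext fun y => h1 y (by simp)
      rwa [this] at h
  | cons y l ih =>
    intro α
    simp only [exs, SInterp.Sat, ih]
    constructor
    · rintro ⟨d, hd, β, h1, h2, h3⟩
      refine ⟨β, ?_, ?_, h3⟩
      · intro z hz
        simp only [List.mem_cons, not_or] at hz
        rw [h1 z hz.2, if_neg hz.1]
      · intro z hz
        by_cases hzl : z ∈ l
        · exact h2 z hzl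
        · have : z = y := by simpa [hzl] using hz
          exact ⟨d, hd, by rw [h1 z hzl, if_pos this]⟩
    · rintro ⟨β, h1, h2, h3⟩
      obtain ⟨d, hd, hy⟩ := h2 y (by simp)
      refine ⟨d, hd, β, ?_, fun z hz => h2 z (by simp [hz]), h3⟩
      intro z hz
      split_ifs with hzy
      · rw [hzy, hy]
      · exact h1 z (by simp [hz, hzy])

theorem rr_exs {σ : Signature} (φ : Formula σ ℕ) (s : Finset ℕ) (h : φ.rr = some s)
    (l : List ℕ) (hl : l.Nodup) (hs : ∀ y ∈ l, y ∈ s) :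
    (exs l φ).rr = some (s \ l.toFinset) := by
  induction l with
  | nil => simp [exs, h]
  | cons y l ih =>
    rw [List.nodup_cons] at hl
    have := ih hl.2 fun z hz => hs z (by simp [hz])
    simp only [exs, Formula.rr, this, Option.bind_some]
    rw [if_pos (by simp [hs y (by simp), hl.1])]
    congr 1
    ext z
    simp only [Finset.mem_erase, Finset.mem_sdiff, List.mem_toFinset, List.mem_cons]
    tauto

theorem fv_exs {σ : Signature} (φ : Formula σ ℕ) (l : List ℕ) :
    (exs l φ).freeVars = φ.freeVars \ l.toFinset := by
  induction l with
  | nil => simp [exs]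
  | cons y l ih =>
    simp only [exs, Formula.freeVars, ih]
    ext z
    simp only [Finset.mem_erase, Finset.mem_sdiff, List.mem_toFinset, List.mem_cons]
    tauto

/-! ## Sources of active-domain elements -/

/-- Variable used at position `j`, where `x` is at position `i`. -/
def vv (x : ℕ) {n : ℕ} (i j : Fin n) : ℕ := if j = i then x else x + 1 + j

theorem vv_inj (x : ℕ) {n : ℕ} (i : Fin n) : Function.Injective (vv x i) := by
  intro j k h
  unfold vv at h
  split_ifs at h with h1 h2 h2
  · rw [h1, h2]
  · omega
  · omega
  · exact Fin.ext (by omega)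

/-- Auxiliary variables. -/
def aux (x : ℕ) {n : ℕ} (i : Fin n) (S : Fin n → Bool) : List ℕ :=
  ((List.finRange n).filter fun j => S j && decide (j ≠ i)).map (vv x i)

theorem mem_aux (x : ℕ) {n : ℕ} (i : Fin n) (S : Fin n → Bool) (y : ℕ) :
    y ∈ aux x i S ↔ ∃ j, S j = true ∧ j ≠ i ∧ vv x i j = y := by
  simp [aux, and_assoc]

theorem aux_nodup (x : ℕ) {n : ℕ} (i : Fin n) (S : Fin n → Bool) : (aux x i S).Nodup :=
  ((List.nodup_finRange n).filter _).map (vv_inj x i)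

/-- The matrix of a source. -/
def srcAtom {σ : Signature} (x : ℕ) (P : σ.Rel) (i : Fin (σ.arity P))
    (S : Fin (σ.arity P) → Bool) : Formula σ ℕ :=
  .atom P fun j => if S j = true then .var (vv x i j) else .null

/-- A source: `x` occurs in `P` at position `i`, with definedness pattern `S`. -/
def src {σ : Signature} (x : ℕ) (P : σ.Rel) (i : Fin (σ.arity P))
    (S : Fin (σ.arity P) → Bool) : Formula σ ℕ :=
  exs (aux x i S) (srcAtom x P i S)

theorem fv_srcAtom {σ : Signature} (x : ℕ) (P : σ.Rel) (i : Fin (σ.arity P))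
    (S : Fin (σ.arity P) → Bool) (y : ℕ) :
    y ∈ (srcAtom x P i S).freeVars ↔ ∃ j, S j = true ∧ vv x i j = y := by
  simp only [srcAtom, Formula.freeVars, Finset.mem_biUnion, Finset.mem_univ, true_and]
  refine exists_congr fun j => ?_
  split_ifs with h <;> simp [Term.vars, h, eq_comm]

theorem fv_src {σ : Signature} (x : ℕ) (P : σ.Rel) (i : Fin (σ.arity P))
    (S : Fin (σ.arity P) → Bool) (hi : S i = true) : (src x P i S).freeVars = {x} := by
  rw [src, fv_exs]
  ext y
  simp only [Finset.mem_sdiff, fv_srcAtom, List.mem_toFinset, mem_aux, Finset.mem_singleton]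
  constructor
  · rintro ⟨⟨j, hj, rfl⟩, h⟩
    by_cases hji : j = i
    · simp [vv, hji]
    · exact absurd ⟨j, hj, hji, rfl⟩ h
  · rintro rfl
    refine ⟨⟨i, hi, by simp [vv]⟩, ?_⟩
    rintro ⟨j, _, hji, h⟩
    simp only [vv, if_neg hji] at h
    omega

theorem rr_src {σ : Signature} (x : ℕ) (P : σ.Rel) (i : Fin (σ.arity P))
    (S : Fin (σ.arity P) → Bool) (hi : S i = true) : (src x P i S).rr = some {x} := by
  rw [← fv_src x P i S hi, src, fv_exs]
  refine rr_exs _ _ rfl _ (aux_nodup x i S) fun y hy => ?_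
  obtain ⟨j, hj, _, h⟩ := (mem_aux x i S y).1 hy
  exact (fv_srcAtom x P i S y).2 ⟨j, hj, h⟩

theorem sat_src {σ : Signature} {U : Type} (I : SInterp σ U) (x : ℕ) (P : σ.Rel)
    (i : Fin (σ.arity P)) (S : Fin (σ.arity P) → Bool) (hi : S i = true)
    (α : ℕ → Option U) (d : U) (hα : α x = some d) :
    SInterp.Sat I α (src x P i S) ↔
      ∃ τ ∈ I.relInterp P, τ i = some d ∧ ∀ j, (τ j).isSome = S j := by
  have hx : x ∉ aux x i S := by
    rw [mem_aux]
    rintro ⟨j, _, hji, h⟩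
    simp only [vv, if_neg hji] at h
    omega
  rw [src, sat_exs]
  constructor
  · rintro ⟨β, h1, h2, h3⟩
    refine ⟨_, h3, ?_, ?_⟩
    · simp [hi, SInterp.termVal, vv, h1 x hx, hα]
    · intro j
      by_cases hj : S j = true
      · simp only [hj, if_true, SInterp.termVal]
        by_cases hji : j = i
        · simp [vv, hji, h1 x hx, hα]
        · obtain ⟨e, _, he⟩ := h2 (vv x i j) ((mem_aux x i S _).2 ⟨j, hj, hji, rfl⟩)
          simp [he]
      · simp [hj, SInterp.termVal]
  · rintro ⟨τ, hτ, hd, hS⟩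
    classical
    refine ⟨fun y => if h : ∃ j, S j = true ∧ j ≠ i ∧ vv x i j = y then τ h.choose else α y,
      ?_, ?_, ?_⟩
    · intro y hy
      rw [mem_aux] at hy
      simp only [dif_neg hy]
    · intro y hy
      rw [mem_aux] at hy
      have h := hy.choose_spec
      have h' := hS hy.choose
      rw [h.1, Option.isSome_iff_exists] at h'
      obtain ⟨e, he⟩ := h'
      exact ⟨e, I.rel_mem P τ hτ _ e he, by simp only [dif_pos hy, he]⟩
    · simp only [srcAtom, SInterp.Sat]
      convert hτ using 1
      funext j
      by_cases hj : S j = true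
      · simp only [hj, if_true, SInterp.termVal]
        by_cases hji : j = i
        · subst hji
          have : vv x j j = x := by simp [vv]
          rw [mem_aux] at hx
          rw [this, dif_neg hx, hα, hd]
        · have h : ∃ k, S k = true ∧ k ≠ i ∧ vv x i k = vv x i j := ⟨j, hj, hji, rfl⟩
          rw [dif_pos h]
          congr 1
          exact vv_inj x i h.choose_spec.2.2
      · have := hS j
        simp only [Bool.not_eq_true] at hj
        rw [hj] at this
        simp only [hj, SInterp.termVal]
        have h0 : τ j = none := by simpa using this
        simp [h0]

theorem exists_sources {σ : Signature} (R : List σ.Rel) (C : List σ.Const) (x : ℕ) :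
    ∃ L : List (Formula σ ℕ), (∀ s ∈ L, s.rr = some {x} ∧ s.freeVars = {x}) ∧
      ∀ (U : Type) (I : SInterp σ U) (α : ℕ → Option U) (d : U), α x = some d →
        ((∃ s ∈ L, SInterp.Sat I α s) ↔ d ∈ adom R C I) := by
  classical
  refine ⟨C.map (fun c => .eq (.var x) (.const c)) ++ R.flatMap fun P =>
    ((Finset.univ : Finset (Fin (σ.arity P) × (Fin (σ.arity P) → Bool))).filter
      fun p => p.2 p.1 = true).toList.map fun p => src x P p.1 p.2, ?_, ?_⟩
  · intro s hs
    simp only [List.mem_append, List.mem_map, List.mem_flatMap, Finset.mem_toList,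
      Finset.mem_filter, Finset.mem_univ, true_and] at hs
    rcases hs with ⟨c, _, rfl⟩ | ⟨P, _, p, hp, rfl⟩
    · simp [Formula.rr, Formula.freeVars, NTerm.vars]
    · exact ⟨rr_src x P _ _ hp, fv_src x P _ _ hp⟩
  · intro U I α d hd
    simp only [List.mem_append, List.mem_map, List.mem_flatMap, Finset.mem_toList,
      Finset.mem_filter, Finset.mem_univ, true_and]
    constructor
    · rintro ⟨s, ⟨c, hc, rfl⟩ | ⟨P, hP, p, hp, rfl⟩, hs⟩
      · left
        obtain ⟨e, h1, h2⟩ := hs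
        simp only [SInterp.ntermVal, Option.some.injEq] at h1 h2
        rw [hd, Option.some.injEq] at h1
        exact ⟨c, hc, by rw [h2, h1]⟩
      · right
        obtain ⟨τ, h1, h2, _⟩ := (sat_src I x P _ _ hp α d hd).1 hs
        exact ⟨P, hP, τ, h1, _, h2⟩
    · rintro (⟨c, hc, h⟩ | ⟨P, hP, τ, hτ, i, hi⟩)
      · exact ⟨_, Or.inl ⟨c, hc, rfl⟩, d, by simp [SInterp.ntermVal, hd],
          by simp [SInterp.ntermVal, h]⟩
      · have hp : (fun j => (τ j).isSome) i = true := by simp [hi]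
        exact ⟨_, Or.inr ⟨P, hP, ⟨i, fun j => (τ j).isSome⟩, hp, rfl⟩,
          (sat_src I x P _ _ hp α d hd).2 ⟨τ, hτ, hi, fun _ => rfl⟩⟩

/-! ## Relativization to the active domain -/

/-- The property of `ψ` being a safe relativization of `φ`. -/
def IsRel {σ : Signature} (R : List σ.Rel) (C : List σ.Const) (φ ψ : Formula σ ℕ) : Prop :=
  (∃ s, ψ.rr = some s) ∧ ψ.freeVars ⊆ φ.freeVars ∧
    ∀ (U : Type) (I J : SInterp σ U), J.Dom = adom R C I → Agree R C I J →
      ∀ α : ℕ → Option U, (SInterp.Sat I α ψ ↔ SInterp.Sat J α φ)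

theorem IsRel.not {σ : Signature} {R : List σ.Rel} {C : List σ.Const} {φ ψ : Formula σ ℕ}
    (h : IsRel R C φ ψ) : IsRel R C φ.not ψ.not := by
  obtain ⟨⟨s, hs⟩, h2, h3⟩ := h
  refine ⟨⟨∅, by simp [Formula.rr, hs]⟩, h2, ?_⟩
  intro U I J hD hA α
  simp only [SInterp.Sat, h3 U I J hD hA]

theorem IsRel.ex {σ : Signature} {R : List σ.Rel} {C : List σ.Const} {φ ψ : Formula σ ℕ}
    (h : IsRel R C φ ψ) (x : ℕ) : ∃ ψ', IsRel R C (.ex x φ) ψ' := by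
  obtain ⟨⟨s, hs⟩, h2, h3⟩ := h
  obtain ⟨L, hL, hL'⟩ := exists_sources R C x
  refine ⟨disj (L.map fun t => .ex x (.and t ψ)), rr_disj _ ?_, fv_disj _ _ ?_, ?_⟩
  · intro χ hχ
    obtain ⟨t, ht, rfl⟩ := List.mem_map.1 hχ
    exact ⟨_, by simp [Formula.rr, hs, (hL t ht).1]; rfl⟩
  · intro χ hχ
    obtain ⟨t, ht, rfl⟩ := List.mem_map.1 hχ
    simp only [Formula.freeVars, (hL t ht).2]
    intro y hy
    simp only [Finset.mem_erase, Finset.mem_union, Finset.mem_singleton] at hy ⊢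
    exact ⟨hy.1, h2 (hy.2.resolve_left hy.1)⟩
  · intro U I J hD hA α
    rw [sat_disj]
    simp only [List.mem_map]
    constructor
    · rintro ⟨_, ⟨t, ht, rfl⟩, d, hd, h4, h5⟩
      refine ⟨d, ?_, (h3 U I J hD hA _).1 h5⟩
      rw [hD]
      exact (hL' U I _ d (by simp)).1 ⟨t, ht, h4⟩
    · rintro ⟨d, hd, h5⟩
      rw [hD] at hd
      obtain ⟨t, ht, h4⟩ := (hL' U I (fun y => if y = x then some d else α y) d (by simp)).2 hd
      exact ⟨_, ⟨t, ht, rfl⟩, d, adom_sub R C I hd, h4, (h3 U I J hD hA _).2 h5⟩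

theorem exists_rel {σ : Signature} {R : List σ.Rel} {C : List σ.Const} (φ : Formula σ ℕ) :
    rels φ ⊆ R → consts φ ⊆ C → ∃ ψ, IsRel R C φ ψ := by
  induction φ with
  | tru => intros; exact ⟨.tru, ⟨_, rfl⟩, subset_rfl, fun _ _ _ _ _ _ => Iff.rfl⟩
  | fls => intros; exact ⟨.fls, ⟨_, rfl⟩, subset_rfl, fun _ _ _ _ _ _ => Iff.rfl⟩
  | atom P ts =>
    intro hR hC
    exact ⟨.atom P ts, ⟨_, rfl⟩, subset_rfl, fun _ _ _ _ hA α => sat_atom_agree hA P ts α hR hC⟩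
  | eq t₁ t₂ =>
    intro hR hC
    refine ⟨.eq t₁ t₂, ?_, subset_rfl, fun _ _ _ _ hA α => sat_eq_agree hA t₁ t₂ α hC⟩
    cases t₁ <;> cases t₂ <;> exact ⟨_, rfl⟩
  | not φ ih =>
    intro hR hC
    obtain ⟨ψ, h⟩ := ih hR hC
    exact ⟨_, h.not⟩
  | and φ χ ih1 ih2 =>
    intro hR hC
    simp only [rels, consts, List.append_subset] at hR hC
    obtain ⟨ψ1, ⟨s1, h1⟩, h2, h3⟩ := ih1 hR.1 hC.1
    obtain ⟨ψ2, ⟨s2, h4⟩, h5, h6⟩ := ih2 hR.2 hC.2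
    refine ⟨.and ψ1 ψ2, ⟨s1 ∪ s2, by simp [Formula.rr, h1, h4]⟩,
      Finset.union_subset_union h2 h5, ?_⟩
    intro U I J hD hA α
    simp only [SInterp.Sat, h3 U I J hD hA, h6 U I J hD hA]
  | or φ χ ih1 ih2 =>
    intro hR hC
    simp only [rels, consts, List.append_subset] at hR hC
    obtain ⟨ψ1, ⟨s1, h1⟩, h2, h3⟩ := ih1 hR.1 hC.1
    obtain ⟨ψ2, ⟨s2, h4⟩, h5, h6⟩ := ih2 hR.2 hC.2
    refine ⟨.or ψ1 ψ2, ⟨s1 ∩ s2, by simp [Formula.rr, h1, h4]⟩,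
      Finset.union_subset_union h2 h5, ?_⟩
    intro U I J hD hA α
    simp only [SInterp.Sat, h3 U I J hD hA, h6 U I J hD hA]
  | ex x φ ih =>
    intro hR hC
    obtain ⟨ψ, h⟩ := ih hR hC
    exact h.ex x
  | all x φ ih =>
    intro hR hC
    obtain ⟨ψ, h⟩ := ih hR hC
    obtain ⟨ψ', h'⟩ := h.not.ex x
    obtain ⟨h1, h2, h3⟩ := h'.not
    refine ⟨_, h1, h2, ?_⟩
    intro U I J hD hA α
    rw [h3 U I J hD hA]
    simp [SInterp.Sat]

/-! ## The case of an empty active domain -/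

theorem exists_prop {σ : Signature} {R : List σ.Rel} {C : List σ.Const} (φ : Formula σ ℕ) :
    rels φ ⊆ R → consts φ ⊆ C → ∃ ψ : Formula σ ℕ, (∃ s, ψ.rr = some s) ∧ ψ.freeVars = ∅ ∧
      ∀ (U : Type) (I J : SInterp σ U) (u : U), J.Dom = {u} → adom R C I = ∅ → Agree R C I J →
        ∀ α β : ℕ → Option U, (∀ x ∈ φ.freeVars, α x = some u) →
          (SInterp.Sat I β ψ ↔ SInterp.Sat J α φ) := by
  induction φ with
  | tru => intros; exact ⟨.tru, ⟨_, rfl⟩, rfl, fun _ _ _ _ _ _ _ _ _ _ => Iff.rfl⟩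
  | fls => intros; exact ⟨.fls, ⟨_, rfl⟩, rfl, fun _ _ _ _ _ _ _ _ _ _ => Iff.rfl⟩
  | atom P ts =>
    intro hR hC
    by_cases h : ∃ i, ts i ≠ .null
    · refine ⟨.fls, ⟨_, rfl⟩, rfl, ?_⟩
      intro U I J u hJ hI hA α β hα
      rw [← sat_atom_agree hA P ts α hR hC]
      simp only [SInterp.Sat, false_iff]
      intro hs
      obtain ⟨i, hi⟩ := h
      have key : ∀ d, I.termVal α (ts i) = some d → False := by
        intro d hd
        have : d ∈ adom R C I := Or.inr ⟨P, hR (by simp [rels]), _, hs, i, hd⟩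
        simp [hI] at this
      cases hti : ts i with
      | const c => exact key _ (by rw [hti]; rfl)
      | null => exact hi hti
      | var x =>
        refine key u ?_
        rw [hti]
        refine hα x ?_
        simp only [Formula.freeVars, Finset.mem_biUnion, Finset.mem_univ, true_and]
        exact ⟨i, by simp [hti, Term.vars]⟩
    · push Not at h
      refine ⟨.atom P ts, ⟨_, rfl⟩, ?_, ?_⟩
      · ext y
        simp [Formula.freeVars, h, Term.vars]
      · intro U I J u hJ hI hA α β hα
        rw [← sat_atom_agree hA P ts α hR hC]
        simp [SInterp.Sat, h, SInterp.termVal]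
  | eq t₁ t₂ =>
    intro hR hC
    refine ⟨.tru, ⟨_, rfl⟩, rfl, ?_⟩
    intro U I J u hJ hI hA α β hα
    have key : ∀ c ∈ C, False := by
      intro c hc
      have : I.constInterp c ∈ adom R C I := Or.inl ⟨c, hc, rfl⟩
      simp [hI] at this
    cases t₁ with
    | const c => exact (key c (hC (by simp [consts, nconsts]))).elim
    | var x =>
      cases t₂ with
      | const c => exact (key c (hC (by simp [consts, nconsts]))).elim
      | var y =>
        simp only [SInterp.Sat, true_iff]
        exact ⟨u, hα x (by simp [Formula.freeVars, NTerm.vars]),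
          hα y (by simp [Formula.freeVars, NTerm.vars])⟩
  | not φ ih =>
    intro hR hC
    obtain ⟨ψ, ⟨s, h1⟩, h2, h3⟩ := ih hR hC
    refine ⟨.not ψ, ⟨∅, by simp [Formula.rr, h1]⟩, h2, ?_⟩
    intro U I J u hJ hI hA α β hα
    simp only [SInterp.Sat, h3 U I J u hJ hI hA α β hα]
  | and φ χ ih1 ih2 =>
    intro hR hC
    simp only [rels, consts, List.append_subset] at hR hC
    obtain ⟨ψ1, ⟨s1, h1⟩, h2, h3⟩ := ih1 hR.1 hC.1
    obtain ⟨ψ2, ⟨s2, h4⟩, h5, h6⟩ := ih2 hR.2 hC.2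
    refine ⟨.and ψ1 ψ2, ⟨s1 ∪ s2, by simp [Formula.rr, h1, h4]⟩,
      by simp [Formula.freeVars, h2, h5], ?_⟩
    intro U I J u hJ hI hA α β hα
    simp only [Formula.freeVars, Finset.mem_union] at hα
    simp only [SInterp.Sat, h3 U I J u hJ hI hA α β fun x hx => hα x (Or.inl hx),
      h6 U I J u hJ hI hA α β fun x hx => hα x (Or.inr hx)]
  | or φ χ ih1 ih2 =>
    intro hR hC
    simp only [rels, consts, List.append_subset] at hR hC
    obtain ⟨ψ1, ⟨s1, h1⟩, h2, h3⟩ := ih1 hR.1 hC.1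
    obtain ⟨ψ2, ⟨s2, h4⟩, h5, h6⟩ := ih2 hR.2 hC.2
    refine ⟨.or ψ1 ψ2, ⟨s1 ∩ s2, by simp [Formula.rr, h1, h4]⟩,
      by simp [Formula.freeVars, h2, h5], ?_⟩
    intro U I J u hJ hI hA α β hα
    simp only [Formula.freeVars, Finset.mem_union] at hα
    simp only [SInterp.Sat, h3 U I J u hJ hI hA α β fun x hx => hα x (Or.inl hx),
      h6 U I J u hJ hI hA α β fun x hx => hα x (Or.inr hx)]
  | ex x φ ih =>
    intro hR hC
    obtain ⟨ψ, h1, h2, h3⟩ := ih hR hC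
    refine ⟨ψ, h1, h2, ?_⟩
    intro U I J u hJ hI hA α β hα
    simp only [SInterp.Sat, hJ, Set.mem_singleton_iff, exists_eq_left]
    refine h3 U I J u hJ hI hA _ β fun y hy => ?_
    split_ifs with hyx
    · rfl
    · exact hα y (Finset.mem_erase.2 ⟨hyx, hy⟩)
  | all x φ ih =>
    intro hR hC
    obtain ⟨ψ, h1, h2, h3⟩ := ih hR hC
    refine ⟨ψ, h1, h2, ?_⟩
    intro U I J u hJ hI hA α β hα
    simp only [SInterp.Sat, hJ, Set.mem_singleton_iff, forall_eq]
    refine h3 U I J u hJ hI hA _ β fun y hy => ?_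
    split_ifs with hyx
    · rfl
    · exact hα y (Finset.mem_erase.2 ⟨hyx, hy⟩)

/-! ## Assembly -/

open Classical in
/-- Restrict an interpretation to finitely many symbols, with a new domain. -/
noncomputable def restrict {σ : Signature} {U : Type} (R : List σ.Rel) (C : List σ.Const)
    (I : SInterp σ U) (a : U) (D : Set U) (ha : a ∈ D) (hD : adom R C I ⊆ D) :
    SInterp σ U where
  Dom := D
  nonempty := ⟨a, ha⟩
  constInterp c := if c ∈ C then I.constInterp c else a
  const_mem c := by
    split_ifs with h
    · exact hD (Or.inl ⟨c, h, rfl⟩)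
    · exact ha
  relInterp P := if P ∈ R then I.relInterp P else ∅
  rel_mem P τ hτ i d hd := by
    split_ifs at hτ with h
    · exact hD (Or.inr ⟨P, h, τ, hτ, i, hd⟩)
    · simp at hτ

theorem agree_restrict {σ : Signature} {U : Type} (R : List σ.Rel) (C : List σ.Const)
    (I : SInterp σ U) (a : U) (D : Set U) (ha : a ∈ D) (hD : adom R C I ⊆ D) :
    Agree R C I (restrict R C I a D ha hD) := by
  constructor
  · intro c hc
    simp [restrict, hc]
  · intro P hP
    simp [restrict, hP]

theorem rr_sub_fv {σ : Signature} (φ : Formula σ ℕ) : ∀ s, φ.rr = some s → s ⊆ φ.freeVars := by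
  induction φ with
  | tru => intro s h; simp only [Formula.rr, Option.some.injEq] at h; simp [← h]
  | fls => intro s h; simp only [Formula.rr, Option.some.injEq] at h; simp [← h]
  | atom P ts =>
    intro s h; simp only [Formula.rr, Option.some.injEq] at h; rw [← h]; exact subset_rfl
  | eq t₁ t₂ =>
    intro s h
    cases t₁ <;> cases t₂ <;> simp only [Formula.rr, Option.some.injEq] at h <;>
      simp [← h, Formula.freeVars, NTerm.vars]
  | not φ ih =>
    intro s h
    simp only [Formula.rr, Option.map_eq_some_iff] at h
    obtain ⟨_, _, rfl⟩ := h
    simp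
  | and φ ψ ih1 ih2 =>
    intro s h
    cases h1 : φ.rr with
    | none => simp [Formula.rr, h1] at h
    | some s1 =>
      cases h2 : ψ.rr with
      | none => simp [Formula.rr, h1, h2] at h
      | some s2 =>
        simp [Formula.rr, h1, h2] at h
        rw [← h]
        exact Finset.union_subset_union (ih1 s1 h1) (ih2 s2 h2)
  | or φ ψ ih1 ih2 =>
    intro s h
    cases h1 : φ.rr with
    | none => simp [Formula.rr, h1] at h
    | some s1 =>
      cases h2 : ψ.rr with
      | none => simp [Formula.rr, h1, h2] at h
      | some s2 =>
        simp [Formula.rr, h1, h2] at h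
        rw [← h]
        exact Finset.inter_subset_left.trans ((ih1 s1 h1).trans Finset.subset_union_left)
  | ex y φ ih =>
    intro s h
    simp only [Formula.rr, Option.bind_eq_some_iff] at h
    obtain ⟨s', h1, h2⟩ := h
    split_ifs at h2 with hy
    simp only [Option.some.injEq] at h2
    rw [← h2]
    exact Finset.erase_subset_erase _ (ih s' h1)
  | all y φ ih => intro s h; simp [Formula.rr] at h

theorem exists_safe {σ : Signature} (φ : Formula σ ℕ) (hφ : φ.freeVars = ∅) (hI : DomIndep φ) :
    ∃ ψ : Formula σ ℕ, ψ.freeVars = ∅ ∧ ψ.SafeRange ∧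
        ∀ (U : Type) (I : SInterp σ U),
          (SInterp.Sat I (fun _ => none) φ ↔ SInterp.Sat I (fun _ => none) ψ) := by
  have hR : rels φ ⊆ rels φ := fun _ h => h
  have hC : consts φ ⊆ consts φ := fun _ h => h
  obtain ⟨ψ1, ⟨s1, h1⟩, h2, h3⟩ := exists_rel φ hR hC
  obtain ⟨ψ0, ⟨s0, h4⟩, h5, h6⟩ := exists_prop φ hR hC
  rw [hφ, Finset.subset_empty] at h2
  obtain ⟨L, hL, hL'⟩ := exists_sources (rels φ) (consts φ) 0
  -- the formula saying that the active domain is nonempty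
  obtain ⟨η, ⟨s, h7⟩, h8, h9⟩ : ∃ η : Formula σ ℕ, (∃ s, η.rr = some s) ∧ η.freeVars = ∅ ∧
      ∀ (U : Type) (I : SInterp σ U),
        (SInterp.Sat I (fun _ => none) η ↔ (adom (rels φ) (consts φ) I).Nonempty) := by
    refine ⟨disj (L.map fun t => .ex 0 t), rr_disj _ ?_, ?_, ?_⟩
    · intro χ hχ
      obtain ⟨t, ht, rfl⟩ := List.mem_map.1 hχ
      exact ⟨_, by simp [Formula.rr, (hL t ht).1]; rfl⟩
    · rw [← Finset.subset_empty]
      refine fv_disj _ _ ?_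
      intro χ hχ
      obtain ⟨t, ht, rfl⟩ := List.mem_map.1 hχ
      simp [Formula.freeVars, (hL t ht).2]
    · intro U I
      rw [sat_disj]
      simp only [List.mem_map]
      constructor
      · rintro ⟨_, ⟨t, ht, rfl⟩, d, hd, h⟩
        exact ⟨d, (hL' U I _ d (by simp)).1 ⟨t, ht, h⟩⟩
      · rintro ⟨d, hd⟩
        obtain ⟨t, ht, h⟩ := (hL' U I (fun y => if y = 0 then some d else none) d (by simp)).2 hd
        exact ⟨_, ⟨t, ht, rfl⟩, d, adom_sub _ _ I hd, h⟩
  have hfv : (Formula.or (.and η ψ1) (.and (.not η) ψ0)).freeVars = ∅ := by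
    simp [Formula.freeVars, h8, h2, h5]
  refine ⟨_, hfv, ?_, ?_⟩
  · have hrr : ∃ r, (Formula.or (.and η ψ1) (.and (.not η) ψ0)).rr = some r :=
      ⟨(s ∪ s1) ∩ (∅ ∪ s0), by simp [Formula.rr, h7, h1, h4]⟩
    obtain ⟨r, hr⟩ := hrr
    have := rr_sub_fv _ r hr
    rw [hfv, Finset.subset_empty] at this
    rw [Formula.SafeRange, hfv, hr, this]
  · intro U I
    have main : ∀ (a : U) (ha : a ∈ I.Dom) (D : Set U) (ha' : a ∈ D)
        (hD : adom (rels φ) (consts φ) I ⊆ D),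
        (SInterp.Sat I (fun _ => none) φ ↔
          SInterp.Sat (restrict _ _ I a D ha' hD) (fun _ => none) φ) := by
      intro a ha D ha' hD
      rw [sat_agree (agree_restrict _ _ I a I.Dom ha (adom_sub _ _ I)) rfl φ hR hC]
      exact hI U _ _ rfl rfl
    simp only [SInterp.Sat, h9]
    by_cases hne : (adom (rels φ) (consts φ) I).Nonempty
    · obtain ⟨a, ha⟩ := hne
      rw [main a (adom_sub _ _ I ha) _ ha subset_rfl,
        ← h3 U I _ rfl (agree_restrict _ _ I a _ ha subset_rfl)]
      have : (adom (rels φ) (consts φ) I).Nonempty := ⟨a, ha⟩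
      simp [this]
    · obtain ⟨a, ha⟩ := I.nonempty
      have he := Set.not_nonempty_iff_eq_empty.1 hne
      have hD : adom (rels φ) (consts φ) I ⊆ {a} := by simp [he]
      rw [main a ha {a} (Set.mem_singleton a) hD,
        ← h6 U I _ a rfl he (agree_restrict _ _ I a {a} (Set.mem_singleton a) hD)
        (fun _ => none) (fun _ => none) (by simp [hφ])]
      simp [hne]

end FOLeAux

/-- Every safe-range closed FOLe formula is domain independent, and every
domain independent closed FOLe formula is logically equivalent to a
safe-range closed FOLe formula. -/
theorem safeRange_iff_domainIndependent {σ : Signature} :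
    (∀ φ : Formula σ ℕ, φ.freeVars = ∅ → φ.SafeRange → DomIndep φ) ∧
    (∀ φ : Formula σ ℕ, φ.freeVars = ∅ → DomIndep φ →
      ∃ ψ : Formula σ ℕ, ψ.freeVars = ∅ ∧ ψ.SafeRange ∧
        ∀ (U : Type) (I : SInterp σ U),
          (SInterp.Sat I (fun _ => none) φ ↔ SInterp.Sat I (fun _ => none) ψ)) := by
  refine ⟨fun φ _ hs U I J hc hr => ⟨?_, ?_⟩, fun φ => FOLeAux.exists_safe φ⟩
  · exact FOLeAux.rr_sat φ _ hs I J hc hr _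
  · exact FOLeAux.rr_sat φ _ hs J I hc.symm hr.symm _
end

section
/- Extension of Codd's Theorem: the relational algebra with null values nRA and the domain independent fragment of FOLe with the Standard Name Assumption are equally expressive. That is: (i) for every nRA expression e of arity n and every n-tuple t with values in C ∪ {N} there is a closed safe-range FOLe formula φ_{e,t} such that, for every database instance I with the Standard Name Assumption, t ∈ eval_I(e) iff the FOLe representation of I satisfies φ_{e,t}; and (ii) for every safe-range closed FOLe formula φ there is an nRA expression e_φ such that, for every database instance I with the Standard Name Assumption, the FOLe representation of I satisfies φ iff eval_I(e_φ) ≠ ∅. -/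
variable {σ : Signature} {V : Type}

/-! ## The relational algebra with null values (nRA) -/

/-- Expressions of the relational algebra with null values nRA, over a
database schema (`Rel`, `ar`) and a set `C` of constants, indexed by their
arity.  Tuples take values in `C ∪ {N}`, encoded as `Option C` with `none`
playing the role of the null value `N`. -/
inductive RA (Rel : Type) (ar : Rel → ℕ) (C : Type) : ℕ → Type where
  | rel : (R : Rel) → RA Rel ar C (ar R)
  | csing : C → RA Rel ar C 1
  | nsing : RA Rel ar C 1
  | selc : {n : ℕ} → Fin n → C → RA Rel ar C n → RA Rel ar C n
  | sel : {n : ℕ} → Fin n → Fin n → RA Rel ar C n → RA Rel ar C n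
  | proj : {n k : ℕ} → (Fin k → Fin n) → RA Rel ar C n → RA Rel ar C k
  | prod : {n m : ℕ} → RA Rel ar C n → RA Rel ar C m → RA Rel ar C (n + m)
  | union : {n : ℕ} → RA Rel ar C n → RA Rel ar C n → RA Rel ar C n
  | diff : {n : ℕ} → RA Rel ar C n → RA Rel ar C n → RA Rel ar C n

/-- A database instance: each `n`-ary relation symbol gets a set of
`n`-tuples over `C ∪ {N}`. -/
def Inst (Rel : Type) (ar : Rel → ℕ) (C : Type) :=
  (R : Rel) → Set (Fin (ar R) → Option C)

/-- Evaluation of nRA expressions.  Both selections succeed only on non-null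
values. -/
def RA.eval {Rel : Type} {ar : Rel → ℕ} {C : Type} (I : Inst Rel ar C) :
    {n : ℕ} → RA Rel ar C n → Set (Fin n → Option C)
  | _, .rel R => I R
  | _, .csing v => {fun _ => some v}
  | _, .nsing => {fun _ => none}
  | _, .selc i v e => {s | s ∈ RA.eval I e ∧ s i = some v}
  | _, .sel i j e => {s | s ∈ RA.eval I e ∧ ∃ d : C, s i = some d ∧ s j = some d}
  | _, .proj p e => {s | ∃ s' ∈ RA.eval I e, ∀ j, s j = s' (p j)}
  | _, .prod e₁ e₂ =>
      {s | ∃ t ∈ RA.eval I e₁, ∃ t' ∈ RA.eval I e₂, s = Fin.append t t'}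
  | _, .union e₁ e₂ => RA.eval I e₁ ∪ RA.eval I e₂
  | _, .diff e₁ e₂ => RA.eval I e₁ \ RA.eval I e₂

/-! ## The FOLe representation of a database instance -/

/-- The FOLe signature of a database schema: the relation symbols with their
arities and the constants `C` (the standard names). -/
def folSig (Rel : Type) (ar : Rel → ℕ) (C : Type) : Signature := ⟨Rel, ar, C⟩

/-- The FOLe representation of a database instance, with the Standard Name
Assumption: the domain is `C`, every constant is interpreted as itself, and
each relation is interpreted as the set of partial tuples obtained from its
tuples by making them undefined exactly at their null positions. -/
def folRep {Rel : Type} {ar : Rel → ℕ} {C : Type} [Nonempty C]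
    (I : Inst Rel ar C) : Interp (folSig Rel ar C) where
  Dom := C
  nonempty := inferInstance
  constInterp := id
  relInterp := fun R => I R

/-! ## The translation Ω from nRA to FOLe -/

/-- Equality between two terms, or `false` when one of them is null. -/
def mkEq {σ : Signature} {V : Type} : Term σ V → Term σ V → Formula σ V
  | .null, _ => .fls
  | _, .null => .fls
  | .var x, .var y => .eq (.var x) (.var y)
  | .var x, .const c => .eq (.var x) (.const c)
  | .const c, .var y => .eq (.const c) (.var y)
  | .const c, .const d => .eq (.const c) (.const d)

/-- Finite disjunction (empty = false, singleton = the formula itself). -/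
def bigOr {σ : Signature} {V : Type} : List (Formula σ V) → Formula σ V
  | [] => .fls
  | [φ] => φ
  | φ :: rest => .or φ (bigOr rest)

/-- The translation `Ω(e,t)` of an nRA expression `e` with respect to a tuple
`t` of terms, with `c` a counter supplying fresh variables (all variables
`≥ c` are fresh). -/
noncomputable def omega {Rel : Type} {ar : Rel → ℕ} {C : Type} :
    {n : ℕ} → RA Rel ar C n → ℕ → (Fin n → Term (folSig Rel ar C) ℕ) →
      Formula (folSig Rel ar C) ℕ
  | _, .rel R, _, t => .atom R t
  | _, .csing v, _, t => mkEq (t 0) (.const v)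
  | _, .nsing, _, t =>
      match t 0 with
      | .null => .tru
      | _ => .fls
  | _, .selc i v e, c, t =>
      match t i with
      | .null => .fls
      | _ => .and (omega e c t) (mkEq (t i) (.const v))
  | _, .sel i j e, c, t =>
      match t i, t j with
      | .null, _ => .fls
      | _, .null => .fls
      | _, _ => .and (omega e c t) (mkEq (t i) (t j))
  | _, .proj (n := n') p e, c, t =>
      (List.range n').foldr (fun i acc => .ex (c + i) acc)
        (bigOr ((Finset.univ \ Finset.image p Finset.univ).powerset.toList.map
          (fun H =>
            omega e (c + n') (fun i =>
              if h : ∃ j, p j = i then t h.choose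
              else if i ∈ H then .null
              else .var (c + i.val)))))
  | _, .prod (n := n₁) (m := n₂) e₁ e₂, c, t =>
      .and (omega e₁ c (fun i => t (Fin.castAdd n₂ i)))
           (omega e₂ c (fun i => t (Fin.natAdd n₁ i)))
  | _, .union e₁ e₂, c, t => .or (omega e₁ c t) (omega e₂ c t)
  | _, .diff e₁ e₂, c, t => .and (omega e₁ c t) (.not (omega e₂ c t))


/-- View a database value (element of `C ∪ {N}`) as a ground FOLe term. -/
def toTerm {Rel : Type} {ar : Rel → ℕ} {C : Type} (o : Option C) :
    Term (folSig Rel ar C) ℕ :=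
  o.elim Term.null (fun v => Term.const (σ := folSig Rel ar C) v)

namespace CoddAux

variable {Rel C : Type} {ar : Rel → ℕ}

/-- Value of a term under a total assignment. -/
def tv (α : ℕ → C) : Term (folSig Rel ar C) ℕ → Option C
  | .const c => some c
  | .var x => some (α x)
  | .null => none

/-- Satisfaction under a total assignment. -/
def S [Nonempty C] (I : Inst Rel ar C) (α : ℕ → C) (φ : Formula (folSig Rel ar C) ℕ) : Prop :=
  Formula.Sat (folRep I) (fun x => some (α x)) φ

section
variable [Nonempty C]

theorem val_tv (I : Inst Rel ar C) (α : ℕ → C) (t : Term (folSig Rel ar C) ℕ) :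
    t.val (folRep I) (fun x => some (α x)) = tv α t := by
  cases t <;> rfl

theorem S_atom (I : Inst Rel ar C) (α : ℕ → C) (P : Rel) (ts : Fin (ar P) → Term (folSig Rel ar C) ℕ) :
    S I α (Formula.atom (σ := folSig Rel ar C) P ts) ↔ (fun i => tv α (ts i)) ∈ I P := by
  have : (fun i => tv α (ts i)) =
      (fun i => (ts i).val (folRep I) (fun x => some (α x))) := by
    funext i; exact (val_tv I α (ts i)).symm
  rw [this]; exact Iff.rfl

theorem S_update (I : Inst Rel ar C) (α : ℕ → C) (x : ℕ) (d : C) (φ : Formula (folSig Rel ar C) ℕ) :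
    Formula.Sat (folRep I) (fun y => if y = x then some d else some (α y)) φ ↔
      S I (Function.update α x d) φ := by
  unfold S
  have : (fun y => if y = x then some d else some (α y)) =
      fun y => some (Function.update α x d y) := by
    funext y; by_cases h : y = x
    · subst h; simp
    · simp [h]
  exact iff_of_eq (congrArg (fun f => Formula.Sat (folRep I) f φ) this)

theorem S_ex (I : Inst Rel ar C) (α : ℕ → C) (x : ℕ) (φ : Formula (folSig Rel ar C) ℕ) :
    S I α (.ex x φ) ↔ ∃ d : C, S I (Function.update α x d) φ :=
  exists_congr fun d => S_update I α x d φ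

theorem S_not (I : Inst Rel ar C) (α : ℕ → C) (φ : Formula (folSig Rel ar C) ℕ) :
    S I α (.not φ) ↔ ¬ S I α φ := Iff.rfl
theorem S_and (I : Inst Rel ar C) (α : ℕ → C) (φ ψ : Formula (folSig Rel ar C) ℕ) :
    S I α (.and φ ψ) ↔ S I α φ ∧ S I α ψ := Iff.rfl
theorem S_or (I : Inst Rel ar C) (α : ℕ → C) (φ ψ : Formula (folSig Rel ar C) ℕ) :
    S I α (.or φ ψ) ↔ S I α φ ∨ S I α ψ := Iff.rfl
theorem S_tru (I : Inst Rel ar C) (α : ℕ → C) :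
    S I α (.tru : Formula (folSig Rel ar C) ℕ) ↔ True := Iff.rfl
theorem S_fls (I : Inst Rel ar C) (α : ℕ → C) :
    S I α (.fls : Formula (folSig Rel ar C) ℕ) ↔ False := Iff.rfl

/-- Value of a null-free term. -/
def ntv (α : ℕ → C) : NTerm (folSig Rel ar C) ℕ → C
  | .const c => c
  | .var x => α x

theorem S_eq (I : Inst Rel ar C) (α : ℕ → C) (a b : NTerm (folSig Rel ar C) ℕ) :
    S I α (.eq a b) ↔ ntv α a = ntv α b := by
  have h : ∀ a : NTerm (folSig Rel ar C) ℕ,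
      a.val (folRep I) (fun x => some (α x)) = some (ntv α a) := by
    intro a; cases a <;> rfl
  unfold S Formula.Sat
  rw [h, h]
  constructor
  · rintro ⟨d, h1, h2⟩
    exact Option.some.inj (h1.trans h2.symm)
  · intro h
    exact ⟨ntv α b, congrArg some h, rfl⟩

end

theorem sat_congr {σ : Signature} (J : Interp σ) (φ : Formula σ ℕ) :
    ∀ (α β : ℕ → Option J.Dom), (∀ x ∈ φ.freeVars, α x = β x) →
      (Formula.Sat J α φ ↔ Formula.Sat J β φ) := by
  induction φ with
  | tru => intros; rfl
  | fls => intros; rfl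
  | atom P ts =>
    intro α β h
    have : (fun i => (ts i).val J α) = fun i => (ts i).val J β := by
      funext i
      have hi : ∀ x ∈ (ts i).vars, α x = β x := fun x hx =>
        h x (by simp only [Formula.freeVars, Finset.mem_biUnion]; exact ⟨i, Finset.mem_univ _, hx⟩)
      cases hti : ts i with
      | var x => exact hi x (by rw [hti]; simp [Term.vars])
      | _ => rfl
    simp only [Formula.Sat, this]
  | eq a b =>
    intro α β h
    have key : ∀ t : NTerm σ ℕ, (∀ x ∈ t.vars, α x = β x) → t.val J α = t.val J β := by
      intro t ht
      cases t with
      | var x => exact ht x (by simp [NTerm.vars])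
      | const c => rfl
    simp only [Formula.Sat]
    rw [key a fun x hx => h x (by simp [Formula.freeVars, hx]),
      key b fun x hx => h x (by simp [Formula.freeVars, hx])]
  | not φ ih => intro α β h; exact not_congr (ih α β h)
  | and φ ψ ih1 ih2 =>
    intro α β h
    exact and_congr (ih1 α β fun x hx => h x (by simp [Formula.freeVars, hx]))
      (ih2 α β fun x hx => h x (by simp [Formula.freeVars, hx]))
  | or φ ψ ih1 ih2 =>
    intro α β h
    exact or_congr (ih1 α β fun x hx => h x (by simp [Formula.freeVars, hx]))
      (ih2 α β fun x hx => h x (by simp [Formula.freeVars, hx]))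
  | ex x φ ih =>
    intro α β h
    refine exists_congr fun d => ih _ _ fun y hy => ?_
    by_cases hyx : y = x
    · simp [hyx]
    · simp only [hyx, if_false]; exact h y (by simp [Formula.freeVars, hyx, hy])
  | all x φ ih =>
    intro α β h
    refine forall_congr' fun d => ih _ _ fun y hy => ?_
    by_cases hyx : y = x
    · simp [hyx]
    · simp only [hyx, if_false]; exact h y (by simp [Formula.freeVars, hyx, hy])

theorem S_congr [Nonempty C] (I : Inst Rel ar C) (φ : Formula (folSig Rel ar C) ℕ) (α β : ℕ → C)
    (h : ∀ x ∈ φ.freeVars, α x = β x) : S I α φ ↔ S I β φ :=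
  sat_congr (folRep I) φ _ _ fun x hx => congrArg some (h x hx)

/-! ### Part (i) -/

/-- The predicate `Q` is definable by a safe-range formula with free variables `X`. -/
def SRD [Nonempty C] (X : Finset ℕ) (Q : Inst Rel ar C → (ℕ → C) → Prop) : Prop :=
  ∃ φ : Formula (folSig Rel ar C) ℕ, φ.freeVars = X ∧ φ.rr = some X ∧ ∀ I α, S I α φ ↔ Q I α

section
variable [Nonempty C] {X Y : Finset ℕ} {Q R : Inst Rel ar C → (ℕ → C) → Prop}

theorem SRD.congr (h : SRD X Q) (hX : X = Y) (hQ : ∀ I α, Q I α ↔ R I α) : SRD Y R := by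
  subst hX
  obtain ⟨φ, h1, h2, h3⟩ := h
  exact ⟨φ, h1, h2, fun I α => (h3 I α).trans (hQ I α)⟩

theorem SRD.and (h : SRD X Q) (h' : SRD Y R) : SRD (X ∪ Y) (fun I α => Q I α ∧ R I α) := by
  obtain ⟨φ, h1, h2, h3⟩ := h
  obtain ⟨ψ, k1, k2, k3⟩ := h'
  refine ⟨.and φ ψ, by simp [Formula.freeVars, h1, k1], by simp [Formula.rr, h2, k2], fun I α => ?_⟩
  rw [S_and, h3, k3]

theorem SRD.or (h : SRD X Q) (h' : SRD X R) : SRD X (fun I α => Q I α ∨ R I α) := by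
  obtain ⟨φ, h1, h2, h3⟩ := h
  obtain ⟨ψ, k1, k2, k3⟩ := h'
  refine ⟨.or φ ψ, by simp [Formula.freeVars, h1, k1], by simp [Formula.rr, h2, k2], fun I α => ?_⟩
  rw [S_or, h3, k3]

theorem SRD.andf (h : SRD X Q) (ψ : Formula (folSig Rel ar C) ℕ) (hf : ψ.freeVars ⊆ X)
    (hr : ∃ Z, ψ.rr = some Z ∧ Z ⊆ X) : SRD X (fun I α => Q I α ∧ S I α ψ) := by
  obtain ⟨φ, h1, h2, h3⟩ := h
  obtain ⟨Z, hr, hZ⟩ := hr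
  refine ⟨.and φ ψ, by simp [Formula.freeVars, h1, hf], by simp [Formula.rr, h2, hr, hZ],
    fun I α => ?_⟩
  rw [S_and, h3]

theorem SRD.diff (h : SRD X Q) (h' : SRD X R) : SRD X (fun I α => Q I α ∧ ¬ R I α) := by
  obtain ⟨ψ, k1, k2, k3⟩ := h'
  refine (h.andf (.not ψ) (by simp [Formula.freeVars, k1])
    ⟨∅, by simp [Formula.rr, k2], by simp⟩).congr rfl fun I α => ?_
  rw [S_not, k3]

theorem SRD.tru : SRD ∅ (fun (_ : Inst Rel ar C) _ => True) :=
  ⟨.tru, rfl, rfl, fun _ _ => Iff.rfl⟩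

theorem SRD.fls : SRD ∅ (fun (_ : Inst Rel ar C) _ => False) :=
  ⟨.fls, rfl, rfl, fun _ _ => Iff.rfl⟩

theorem SRD.eqc (x : ℕ) (c : C) : SRD {x} (fun (_ : Inst Rel ar C) α => α x = c) :=
  ⟨.eq (.var x) (.const c), by simp [Formula.freeVars, NTerm.vars], rfl,
    fun I α => S_eq I α _ _⟩

theorem SRD.false (X : Finset ℕ) : SRD X (fun (_ : Inst Rel ar C) _ => False) := by
  induction X using Finset.induction_on with
  | empty => exact SRD.fls
  | insert a s _ ih =>
    obtain ⟨c⟩ := ‹Nonempty C›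
    exact ((SRD.eqc a c).and ih).congr (by rfl) (by simp)

theorem SRD.ex (h : SRD X Q) {x : ℕ} (hx : x ∈ X) :
    SRD (X.erase x) (fun I α => ∃ d, Q I (Function.update α x d)) := by
  obtain ⟨φ, h1, h2, h3⟩ := h
  refine ⟨.ex x φ, by simp [Formula.freeVars, h1], by simp [Formula.rr, h2, hx], fun I α => ?_⟩
  rw [S_ex]
  exact exists_congr fun d => h3 _ _

theorem SRD.exs (h : SRD X Q) (Y : Finset ℕ) (hY : Y ⊆ X) :
    SRD (X \ Y) (fun I α => ∃ β : ℕ → C, (∀ x, x ∉ Y → β x = α x) ∧ Q I β) := by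
  induction Y using Finset.induction_on with
  | empty =>
    refine h.congr (by simp) fun I α => ⟨fun h => ⟨α, fun _ _ => rfl, h⟩, ?_⟩
    rintro ⟨β, h1, h2⟩
    have : β = α := funext fun x => h1 x (by simp)
    rwa [← this]
  | insert y Y hy ih =>
    have ih := ih fun x hx => hY (Finset.mem_insert_of_mem hx)
    refine (ih.ex (x := y) (by simp [hy, hY (Finset.mem_insert_self _ _)])).congr ?_ fun I α => ?_
    · ext z; simp; tauto
    · constructor
      · rintro ⟨d, β, h1, h2⟩
        refine ⟨β, fun x hx => ?_, h2⟩
        simp only [Finset.mem_insert, not_or] at hx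
        rw [h1 x hx.2, Function.update_of_ne hx.1]
      · rintro ⟨β, h1, h2⟩
        refine ⟨β y, β, fun x hx => ?_, h2⟩
        by_cases hxy : x = y
        · subst hxy; simp
        · rw [Function.update_of_ne hxy]; exact h1 x (by simp [hxy, hx])

theorem SRD.bigOr {ι : Type} [DecidableEq ι] (s : Finset ι) (Q : ι → Inst Rel ar C → (ℕ → C) → Prop)
    (h : ∀ i, SRD X (Q i)) : SRD X (fun I α => ∃ i ∈ s, Q i I α) := by
  induction s using Finset.induction_on with
  | empty => exact (SRD.false X).congr rfl (by simp)
  | insert a s _ ih => exact ((h a).or ih).congr rfl (by simp)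

theorem SRD.bigAnd {ι : Type} [DecidableEq ι] (s : Finset ι) (X : ι → Finset ℕ)
    (Q : ι → Inst Rel ar C → (ℕ → C) → Prop)
    (h : ∀ i, SRD (X i) (Q i)) : SRD (s.biUnion X) (fun I α => ∀ i ∈ s, Q i I α) := by
  induction s using Finset.induction_on with
  | empty => exact SRD.tru.congr rfl (by simp)
  | insert a s _ ih => exact ((h a).and ih).congr (by simp) (by simp)

theorem SRD.tvc (t : Term (folSig Rel ar C) ℕ) (c : C) :
    SRD t.vars (fun (_ : Inst Rel ar C) α => tv α t = some c) := by
  cases t with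
  | null => exact SRD.fls.congr rfl (by simp [tv])
  | var x => exact (SRD.eqc x c).congr rfl (by simp [tv])
  | const d =>
    by_cases h : d = c
    · exact SRD.tru.congr rfl (by simp [tv, h])
    · refine SRD.fls.congr rfl fun I α => ?_
      simp only [tv, false_iff]
      exact fun h' => h (Option.some.inj h')

theorem SRD.tvn (t : Term (folSig Rel ar C) ℕ) :
    SRD t.vars (fun (_ : Inst Rel ar C) α => tv α t = none) := by
  cases t with
  | null => exact SRD.tru.congr rfl (by simp [tv])
  | var x => exact (SRD.false {x}).congr rfl (by simp [tv])
  | const d => exact SRD.fls.congr rfl (by simp [tv])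


theorem SRD.andEq (h : SRD X Q) (a b : NTerm (folSig Rel ar C) ℕ) (ha : a.vars ⊆ X)
    (hb : b.vars ⊆ X) : SRD X (fun I α => Q I α ∧ ntv α a = ntv α b) := by
  refine (h.andf (.eq a b) (Finset.union_subset ha hb) ?_).congr rfl fun I α => by rw [S_eq]
  cases a <;> cases b <;>
    first
    | exact ⟨_, rfl, ha⟩
    | exact ⟨_, rfl, hb⟩
    | exact ⟨_, rfl, Finset.empty_subset _⟩

theorem SRD.teq (h : SRD X Q) (a b : Term (folSig Rel ar C) ℕ) (ha : a.vars ⊆ X)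
    (hb : b.vars ⊆ X) : SRD X (fun I α => Q I α ∧ tv α a = tv α b) := by
  cases a with
  | null =>
    cases b with
    | null => exact h.congr rfl (by simp)
    | _ => exact (SRD.false X).congr rfl (by simp [tv])
  | const c =>
    cases b with
    | null => exact (SRD.false X).congr rfl (by simp [tv])
    | const d =>
      exact (h.andEq (.const c) (.const d) ha hb).congr rfl fun I α =>
        and_congr Iff.rfl (Option.some_inj (a := c) (b := d)).symm
    | var y =>
      exact (h.andEq (.const c) (.var y) ha hb).congr rfl fun I α =>
        and_congr Iff.rfl (Option.some_inj (a := c) (b := α y)).symm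
  | var x =>
    cases b with
    | null => exact (SRD.false X).congr rfl (by simp [tv])
    | const d =>
      exact (h.andEq (.var x) (.const d) ha hb).congr rfl fun I α =>
        and_congr Iff.rfl (Option.some_inj (a := α x) (b := d)).symm
    | var y =>
      exact (h.andEq (.var x) (.var y) ha hb).congr rfl fun I α =>
        and_congr Iff.rfl (Option.some_inj (a := α x) (b := α y)).symm

/-- Variables of a tuple of terms. -/
def tvars {n : ℕ} (t : Fin n → Term (folSig Rel ar C) ℕ) : Finset ℕ :=
  Finset.univ.biUnion fun i => (t i).vars

theorem mem_tvars {n : ℕ} (t : Fin n → Term (folSig Rel ar C) ℕ) (x : ℕ) :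
    x ∈ tvars t ↔ ∃ i, x ∈ (t i).vars := by simp [tvars]

theorem vars_sub {n : ℕ} (t : Fin n → Term (folSig Rel ar C) ℕ) (i : Fin n) :
    (t i).vars ⊆ tvars t := fun x hx => (mem_tvars t x).2 ⟨i, hx⟩

theorem tv_congr (α β : ℕ → C) (t : Term (folSig Rel ar C) ℕ) (h : ∀ x ∈ t.vars, α x = β x) :
    tv α t = tv β t := by
  cases t with
  | var x => exact congrArg some (h x (by simp [Term.vars]))
  | _ => rfl

theorem SRD.proj {n k : ℕ} (p : Fin k → Fin n) (e : RA Rel ar C n)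
    (ih : ∀ t : Fin n → Term (folSig Rel ar C) ℕ,
      SRD (tvars t) (fun I α => (fun i => tv α (t i)) ∈ RA.eval I e))
    (t : Fin k → Term (folSig Rel ar C) ℕ) :
    SRD (tvars t) (fun I α => (fun i => tv α (t i)) ∈ RA.eval I (.proj p e)) := by
  obtain ⟨c, hc⟩ : ∃ c, ∀ x ∈ tvars t, x < c :=
    ⟨(tvars t).sup id + 1, fun x hx => Nat.lt_succ_of_le (Finset.le_sup (f := id) hx)⟩
  let u : Finset (Fin n) → Fin n → Term (folSig Rel ar C) ℕ :=
    fun H i => if i ∈ H then .null else .var (c + i)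
  have hu : ∀ H x, x ∈ tvars (u H) ↔ ∃ i : Fin n, i ∉ H ∧ x = c + i := by
    intro H x
    rw [mem_tvars]
    refine exists_congr fun i => ?_
    by_cases hi : i ∈ H <;> simp [u, hi, Term.vars]
  have hfresh : ∀ H x, x ∈ tvars (u H) → x ∉ tvars t := by
    intro H x hx hx'
    obtain ⟨i, _, rfl⟩ := (hu H x).1 hx
    have := hc _ hx'
    omega
  -- the disjunct for H
  have step : ∀ H : Finset (Fin n), SRD (tvars t) (fun I α => ∃ β : ℕ → C,
      (∀ x, x ∉ tvars (u H) → β x = α x) ∧ ((fun i => tv β (u H i)) ∈ RA.eval I e ∧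
        ∀ j, tv β (u H (p j)) = tv β (t j))) := by
    intro H
    have hj : ∀ j, SRD (tvars (u H) ∪ (t j).vars) (fun I α =>
        (fun i => tv α (u H i)) ∈ RA.eval I e ∧ tv α (u H (p j)) = tv α (t j)) := by
      intro j
      have h1 := (ih (u H)).and (ih (Function.update (u H) (p j) (t j)))
      have hX : tvars (u H) ∪ tvars (Function.update (u H) (p j) (t j)) =
          tvars (u H) ∪ (t j).vars := by
        ext x
        simp only [Finset.mem_union]
        constructor
        · rintro (h | h)
          · exact Or.inl h
          · obtain ⟨i, hi⟩ := (mem_tvars _ _).1 h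
            by_cases hip : i = p j
            · subst hip; rw [Function.update_self] at hi; exact Or.inr hi
            · rw [Function.update_of_ne hip] at hi; exact Or.inl ((mem_tvars _ _).2 ⟨i, hi⟩)
        · rintro (h | h)
          · exact Or.inl h
          · exact Or.inr ((mem_tvars _ _).2 ⟨p j, by rwa [Function.update_self]⟩)
      rw [hX] at h1
      refine (h1.teq (u H (p j)) (t j) ((vars_sub _ _).trans Finset.subset_union_left)
        Finset.subset_union_right).congr rfl fun I α => ?_
      constructor
      · rintro ⟨⟨a, _⟩, b⟩; exact ⟨a, b⟩
      · rintro ⟨a, b⟩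
        refine ⟨⟨a, ?_⟩, b⟩
        have : (fun i => tv α (Function.update (u H) (p j) (t j) i)) = fun i => tv α (u H i) := by
          funext i
          by_cases hip : i = p j
          · subst hip; rw [Function.update_self, b]
          · rw [Function.update_of_ne hip]
        rwa [this]
    have hall := ((ih (u H)).and (SRD.bigAnd Finset.univ _ _ hj)).exs (tvars (u H))
      Finset.subset_union_left
    refine hall.congr ?_ fun I α => ?_
    · ext x
      have := hfresh H x
      simp only [Finset.mem_sdiff, Finset.mem_union, Finset.mem_biUnion, Finset.mem_univ, true_and,
        mem_tvars t] at this ⊢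
      constructor
      · rintro ⟨h | ⟨i, h | h⟩, h'⟩
        · exact absurd h h'
        · exact absurd h h'
        · exact ⟨i, h⟩
      · rintro ⟨i, h⟩
        exact ⟨Or.inr ⟨i, Or.inr h⟩, fun h' => this h' ⟨i, h⟩⟩
    · refine exists_congr fun β => and_congr Iff.rfl ?_
      constructor
      · rintro ⟨a, b⟩; exact ⟨a, fun j => (b j (Finset.mem_univ _)).2⟩
      · rintro ⟨a, b⟩; exact ⟨a, fun j _ => ⟨a, b j⟩⟩
  refine (SRD.bigOr Finset.univ _ step).congr rfl fun I α => ?_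
  constructor
  · rintro ⟨H, -, β, h1, h2, h3⟩
    refine ⟨_, h2, fun j => ?_⟩
    rw [h3 j]
    refine tv_congr _ _ _ fun x hx => (h1 x fun hx' => hfresh H x hx' (vars_sub _ _ hx)).symm
  · rintro ⟨s, hs, hst⟩
    classical
    let H : Finset (Fin n) := Finset.univ.filter fun i => s i = none
    let β : ℕ → C := fun x => if h : c ≤ x ∧ x - c < n then (s ⟨x - c, h.2⟩).getD (α x) else α x
    have hβ : ∀ i : Fin n, β (c + i) = (s i).getD (α (c + i)) := by
      intro i
      have hh : c ≤ c + (i : ℕ) ∧ c + (i : ℕ) - c < n := by have := i.2; omega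
      simp only [β]
      rw [dif_pos hh]
      congr 2
      apply Fin.ext; simp
    have hus : (fun i => tv β (u H i)) = s := by
      funext i
      by_cases hi : s i = none
      · simp [u, H, hi, tv]
      · obtain ⟨d, hd⟩ := Option.ne_none_iff_exists'.1 hi
        have : u H i = .var (c + i) := by simp [u, H, hi]
        rw [this]
        simp [tv, hβ, hd]
    have hoff : ∀ x, x ∉ tvars (u H) → β x = α x := by
      intro x hx
      by_cases h : c ≤ x ∧ x - c < n
      · have hxi : x = c + (⟨x - c, h.2⟩ : Fin n) := by simp; omega
        have hn : s ⟨x - c, h.2⟩ = none := by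
          by_contra hne
          exact hx ((hu H x).2 ⟨⟨x - c, h.2⟩, by simp [H, hne], hxi⟩)
        simp [β, h, hn]
      · simp only [β]; rw [dif_neg h]
    refine ⟨H, Finset.mem_univ _, β, hoff, by rw [hus]; exact hs, fun j => ?_⟩
    have h1 : tv β (u H (p j)) = s (p j) := congrFun hus (p j)
    rw [h1, ← hst j]
    exact tv_congr _ _ _ fun x hx => (hoff x fun hx' => hfresh H x hx' (vars_sub _ _ hx)).symm

theorem SRD.main {n : ℕ} (e : RA Rel ar C n) : ∀ t : Fin n → Term (folSig Rel ar C) ℕ,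
    SRD (tvars t) (fun I α => (fun i => tv α (t i)) ∈ RA.eval I e) := by
  induction e with
  | rel R => exact fun t => ⟨Formula.atom (σ := folSig Rel ar C) R t, rfl, rfl,
      fun I α => S_atom I α R t⟩
  | csing v =>
    intro t
    refine (SRD.tvc (t 0) v).congr (by simp [tvars]) fun I α => ?_
    simp [RA.eval, funext_iff]
  | nsing =>
    intro t
    refine (SRD.tvn (t 0)).congr (by simp [tvars]) fun I α => ?_
    simp [RA.eval, funext_iff]
  | selc i v e ih =>
    intro t
    exact ((ih t).and (SRD.tvc (t i) v)).congr (Finset.union_eq_left.2 (vars_sub t i))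
      fun I α => Iff.rfl
  | sel i j e ih =>
    intro t
    by_cases h : t i = .null
    · refine (SRD.false _).congr rfl fun I α => ?_
      simp [RA.eval, h, tv]
    · refine ((ih t).teq (t i) (t j) (vars_sub t i) (vars_sub t j)).congr rfl fun I α => ?_
      refine and_congr Iff.rfl ⟨fun h' => ?_, ?_⟩
      · have : ∃ d, tv α (t i) = some d := by
          cases hti : t i with
          | null => exact absurd hti h
          | const c => exact ⟨_, rfl⟩
          | var x => exact ⟨_, rfl⟩
        obtain ⟨d, hd⟩ := this
        exact ⟨d, hd, h'.symm.trans hd⟩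
      · rintro ⟨d, h1, h2⟩; exact h1.trans h2.symm
  | proj p e ih => exact SRD.proj p e ih
  | prod e₁ e₂ ih₁ ih₂ =>
    intro t
    refine ((ih₁ fun i => t (Fin.castAdd _ i)).and (ih₂ fun i => t (Fin.natAdd _ i))).congr ?_
      fun I α => ?_
    · ext x
      simp only [Finset.mem_union, mem_tvars]
      constructor
      · rintro (⟨i, h⟩ | ⟨i, h⟩)
        exacts [⟨_, h⟩, ⟨_, h⟩]
      · rintro ⟨i, h⟩
        induction i using Fin.addCases with
        | left i => exact Or.inl ⟨i, h⟩
        | right i => exact Or.inr ⟨i, h⟩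
    · constructor
      · rintro ⟨h1, h2⟩
        refine ⟨_, h1, _, h2, ?_⟩
        funext i
        induction i using Fin.addCases with
        | left i => simp
        | right i => simp
      · rintro ⟨s, hs, s', hs', h⟩
        have h1 : (fun i => tv α (t (Fin.castAdd _ i))) = s := by
          funext i; have := congrFun h (Fin.castAdd _ i); simpa using this
        have h2 : (fun i => tv α (t (Fin.natAdd _ i))) = s' := by
          funext i; have := congrFun h (Fin.natAdd _ i); simpa using this
        exact ⟨h1 ▸ hs, h2 ▸ hs'⟩
  | union e₁ e₂ ih₁ ih₂ => exact fun t => (ih₁ t).or (ih₂ t)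
  | diff e₁ e₂ ih₁ ih₂ => exact fun t => (ih₁ t).diff (ih₂ t)

theorem part_one (n : ℕ) (e : RA Rel ar C n) (t : Fin n → Option C) :
      ∃ φ : Formula (folSig Rel ar C) ℕ,
        φ.freeVars = ∅ ∧ φ.SafeRange ∧
        ∀ I : Inst Rel ar C,
          (t ∈ RA.eval I e ↔ Formula.Sat (folRep I) (fun _ => none) φ) := by
  obtain ⟨φ, h1, h2, h3⟩ := SRD.main e fun i => toTerm (t i)
  have hX : tvars (fun i => (toTerm (t i) : Term (folSig Rel ar C) ℕ)) = ∅ := by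
    ext x
    simp only [mem_tvars, Finset.notMem_empty, iff_false, not_exists]
    intro i
    cases t i <;> simp [toTerm, Term.vars]
  rw [hX] at h1 h2
  refine ⟨φ, h1, by rw [Formula.SafeRange, h1, h2], fun I => ?_⟩
  obtain ⟨c⟩ := ‹Nonempty C›
  have h4 : S I (fun _ => c) φ ↔ (fun i => tv (fun _ => c) (toTerm (t i) : Term (folSig Rel ar C) ℕ)) ∈ RA.eval I e := h3 I fun _ => c
  have ht : (fun i => tv (fun _ => c) (toTerm (t i) : Term (folSig Rel ar C) ℕ)) = t := by
    funext i; cases h : t i <;> rfl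
  rw [ht] at h4
  rw [← h4]
  exact sat_congr (folRep I) φ _ _ (by simp [h1])

end

/-! ### Part (ii) -/

/-- Constants of a null-free term. -/
def ncst : NTerm (folSig Rel ar C) ℕ → Set C
  | .const c => {c}
  | .var _ => ∅

/-- Active domain of a formula in an instance. -/
def adom (I : Inst Rel ar C) : Formula (folSig Rel ar C) ℕ → Set C
  | .tru => ∅
  | .fls => ∅
  | .atom P _ => {c | ∃ i : Fin (ar P), ∃ s ∈ I P, s i = some c}
  | .eq a b => ncst a ∪ ncst b
  | .not φ => adom I φ
  | .and φ ψ => adom I φ ∪ adom I ψ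
  | .or φ ψ => adom I φ ∪ adom I ψ
  | .ex _ φ => adom I φ
  | .all _ φ => adom I φ

/-- All variables of the formula are below `k`. -/
def bnd (k : ℕ) : Formula (folSig Rel ar C) ℕ → Prop
  | .tru => True
  | .fls => True
  | .atom _ ts => ∀ i, ∀ x ∈ (ts i).vars, x < k
  | .eq a b => ∀ x ∈ a.vars ∪ b.vars, x < k
  | .not φ => bnd k φ
  | .and φ ψ => bnd k φ ∧ bnd k ψ
  | .or φ ψ => bnd k φ ∧ bnd k ψ
  | .ex x φ => x < k ∧ bnd k φ
  | .all x φ => x < k ∧ bnd k φ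

theorem bnd_mono {k l : ℕ} (h : k ≤ l) (φ : Formula (folSig Rel ar C) ℕ) (hk : bnd k φ) :
    bnd l φ := by
  induction φ with
  | tru => trivial
  | fls => trivial
  | atom P ts => exact fun i x hx => (hk i x hx).trans_le h
  | eq a b => exact fun x hx => (hk x hx).trans_le h
  | not φ ih => exact ih hk
  | and φ ψ ih1 ih2 => exact ⟨ih1 hk.1, ih2 hk.2⟩
  | or φ ψ ih1 ih2 => exact ⟨ih1 hk.1, ih2 hk.2⟩
  | ex x φ ih => exact ⟨hk.1.trans_le h, ih hk.2⟩
  | all x φ ih => exact ⟨hk.1.trans_le h, ih hk.2⟩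

theorem exists_bnd (φ : Formula (folSig Rel ar C) ℕ) : ∃ k, bnd k φ := by
  have hs : ∀ (s : Finset ℕ), ∀ x ∈ s, x < s.sup id + 1 :=
    fun s x hx => Nat.lt_succ_of_le (Finset.le_sup (f := id) hx)
  induction φ with
  | tru => exact ⟨0, trivial⟩
  | fls => exact ⟨0, trivial⟩
  | atom P ts =>
    exact ⟨_, fun i x hx => hs (Finset.univ.biUnion fun i => (ts i).vars) x
      (Finset.mem_biUnion.2 ⟨i, Finset.mem_univ _, hx⟩)⟩
  | eq a b => exact ⟨_, hs _⟩
  | not φ ih => exact ih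
  | and φ ψ ih1 ih2 =>
    obtain ⟨k, hk⟩ := ih1
    obtain ⟨l, hl⟩ := ih2
    exact ⟨max k l, bnd_mono (le_max_left _ _) _ hk, bnd_mono (le_max_right _ _) _ hl⟩
  | or φ ψ ih1 ih2 =>
    obtain ⟨k, hk⟩ := ih1
    obtain ⟨l, hl⟩ := ih2
    exact ⟨max k l, bnd_mono (le_max_left _ _) _ hk, bnd_mono (le_max_right _ _) _ hl⟩
  | ex x φ ih =>
    obtain ⟨k, hk⟩ := ih
    exact ⟨max k (x + 1), lt_of_lt_of_le (Nat.lt_succ_self x) (le_max_right _ _),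
      bnd_mono (le_max_left _ _) _ hk⟩
  | all x φ ih =>
    obtain ⟨k, hk⟩ := ih
    exact ⟨max k (x + 1), lt_of_lt_of_le (Nat.lt_succ_self x) (le_max_right _ _),
      bnd_mono (le_max_left _ _) _ hk⟩

section
variable [Nonempty C]

theorem rr_and {φ ψ : Formula (folSig Rel ar C) ℕ} {Z : Finset ℕ} (h : (φ.and ψ).rr = some Z) :
    ∃ Z1 Z2, φ.rr = some Z1 ∧ ψ.rr = some Z2 ∧ Z = Z1 ∪ Z2 := by
  cases h1 : φ.rr <;> cases h2 : ψ.rr <;> simp [Formula.rr, h1, h2] at h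
  exact ⟨_, _, rfl, rfl, h.symm⟩

theorem rr_or {φ ψ : Formula (folSig Rel ar C) ℕ} {Z : Finset ℕ} (h : (φ.or ψ).rr = some Z) :
    ∃ Z1 Z2, φ.rr = some Z1 ∧ ψ.rr = some Z2 ∧ Z = Z1 ∩ Z2 := by
  cases h1 : φ.rr <;> cases h2 : ψ.rr <;> simp [Formula.rr, h1, h2] at h
  exact ⟨_, _, rfl, rfl, h.symm⟩

theorem rr_ex {φ : Formula (folSig Rel ar C) ℕ} {x : ℕ} {Z : Finset ℕ}
    (h : (φ.ex x).rr = some Z) : ∃ Z1, φ.rr = some Z1 ∧ x ∈ Z1 ∧ Z = Z1.erase x := by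
  cases h1 : φ.rr <;> simp [Formula.rr, h1] at h
  exact ⟨_, rfl, h.1, h.2.symm⟩

/-- Range-restricted variables take values in the active domain. -/
theorem range_adom (I : Inst Rel ar C) (φ : Formula (folSig Rel ar C) ℕ) :
    ∀ (Z : Finset ℕ) (α : ℕ → C), φ.rr = some Z → S I α φ → ∀ x ∈ Z, α x ∈ adom I φ := by
  induction φ with
  | tru => intro Z α h _ x hx; simp [Formula.rr] at h; simp [← h] at hx
  | fls => intro Z α h hS; exact hS.elim
  | atom P ts =>
    intro Z α h hS x hx
    obtain rfl := Option.some.inj h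
    obtain ⟨i, -, hi⟩ := Finset.mem_biUnion.1 hx
    refine ⟨i, _, (S_atom I α P ts).1 hS, ?_⟩
    cases hti : ts i with
    | var y =>
      rw [hti] at hi
      obtain rfl : x = y := by simpa [Term.vars] using hi
      rfl
    | const c => rw [hti] at hi; simp [Term.vars] at hi
    | null => rw [hti] at hi; simp [Term.vars] at hi
  | eq a b =>
    intro Z α h hS x hx
    rw [S_eq] at hS
    cases a with
    | const c =>
      cases b with
      | const d => obtain rfl := Option.some.inj h; simp at hx
      | var y =>
        obtain rfl := Option.some.inj h
        obtain rfl := Finset.mem_singleton.1 hx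
        exact Or.inl (Eq.symm hS)
    | var y =>
      cases b with
      | var d => obtain rfl := Option.some.inj h; simp at hx
      | const c =>
        obtain rfl := Option.some.inj h
        obtain rfl := Finset.mem_singleton.1 hx
        exact Or.inr hS
  | not φ ih =>
    intro Z α h hS x hx
    cases h1 : φ.rr <;> simp [Formula.rr, h1] at h
    simp [← h] at hx
  | and φ ψ ih1 ih2 =>
    intro Z α h hS x hx
    obtain ⟨Z1, Z2, h1, h2, rfl⟩ := rr_and h
    rcases Finset.mem_union.1 hx with hx | hx
    · exact Or.inl (ih1 _ _ h1 hS.1 x hx)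
    · exact Or.inr (ih2 _ _ h2 hS.2 x hx)
  | or φ ψ ih1 ih2 =>
    intro Z α h hS x hx
    obtain ⟨Z1, Z2, h1, h2, rfl⟩ := rr_or h
    rw [Finset.mem_inter] at hx
    rcases hS with hS | hS
    · exact Or.inl (ih1 _ _ h1 hS x hx.1)
    · exact Or.inr (ih2 _ _ h2 hS x hx.2)
  | ex y φ ih =>
    intro Z α h hS x hx
    obtain ⟨Z1, h1, hy, rfl⟩ := rr_ex h
    obtain ⟨d, hd⟩ := (S_ex I α y φ).1 hS
    rw [Finset.mem_erase] at hx
    have := ih _ _ h1 hd x hx.2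
    rwa [Function.update_of_ne hx.1] at this
  | all y φ ih => intro Z α h; simp [Formula.rr] at h

end

/-- Unary queries without nulls definable in the algebra. -/
def UD (A : Inst Rel ar C → Set C) : Prop :=
  ∃ e : RA Rel ar C 1, ∀ I s, s ∈ RA.eval I e ↔ ∃ a ∈ A I, s = fun _ => some a

theorem UD.empty : UD (fun _ : Inst Rel ar C => (∅ : Set C)) :=
  ⟨.diff .nsing .nsing, fun I s => by simp [RA.eval]⟩

theorem UD.single (c : C) : UD (fun _ : Inst Rel ar C => {c}) :=
  ⟨.csing c, fun I s => by simp [RA.eval]⟩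

theorem UD.union {A B : Inst Rel ar C → Set C} (hA : UD A) (hB : UD B) :
    UD (fun I => A I ∪ B I) := by
  obtain ⟨e, he⟩ := hA
  obtain ⟨f, hf⟩ := hB
  refine ⟨.union e f, fun I s => ?_⟩
  have : s ∈ RA.eval I (.union e f) ↔ s ∈ RA.eval I e ∨ s ∈ RA.eval I f := Iff.rfl
  rw [this, he, hf]
  constructor
  · rintro (⟨a, h, h'⟩ | ⟨a, h, h'⟩)
    exacts [⟨a, Or.inl h, h'⟩, ⟨a, Or.inr h, h'⟩]
  · rintro ⟨a, h | h, h'⟩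
    exacts [Or.inl ⟨a, h, h'⟩, Or.inr ⟨a, h, h'⟩]

theorem UD.biUnion {ι : Type} [DecidableEq ι] (s : Finset ι) (A : ι → Inst Rel ar C → Set C)
    (h : ∀ i, UD (A i)) : UD (fun I => {c | ∃ i ∈ s, c ∈ A i I}) := by
  induction s using Finset.induction_on with
  | empty => simpa using (UD.empty (Rel := Rel) (C := C) (ar := ar))
  | insert a s _ ih =>
    have := (h a).union ih
    have e : (fun I => {c | ∃ i ∈ insert a s, c ∈ A i I}) =
        fun I => A a I ∪ {c | ∃ i ∈ s, c ∈ A i I} := by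
      funext I; ext c; simp
    rwa [e]

theorem UD.col (P : Rel) (i : Fin (ar P)) :
    UD (fun I : Inst Rel ar C => {c | ∃ s ∈ I P, s i = some c}) := by
  refine ⟨.sel 0 0 (.proj (fun _ : Fin 1 => i) (.rel P)), fun I s => ?_⟩
  constructor
  · rintro ⟨⟨r, hr, hrs⟩, d, hd, -⟩
    refine ⟨d, ⟨r, hr, (hrs 0).symm.trans hd⟩, funext fun j => ?_⟩
    rw [← hd, Subsingleton.elim j 0]
  · rintro ⟨c, ⟨r, hr, hc⟩, rfl⟩
    exact ⟨⟨r, hr, fun _ => hc.symm⟩, c, rfl, rfl⟩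

theorem UD.ncst (a : NTerm (folSig Rel ar C) ℕ) : UD (fun _ : Inst Rel ar C => ncst a) := by
  cases a with
  | const c => exact UD.single (C := C) c
  | var x => exact UD.empty

theorem UD.adom (φ : Formula (folSig Rel ar C) ℕ) : UD (fun I : Inst Rel ar C => adom I φ) := by
  induction φ with
  | tru => exact UD.empty
  | fls => exact UD.empty
  | atom P ts =>
    have h := UD.biUnion (Finset.univ : Finset (Fin (ar P))) _ (UD.col (Rel := Rel) (C := C) P)
    simp only [Finset.mem_univ, true_and] at h
    exact h
  | eq a b => exact (UD.ncst a).union (UD.ncst b)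
  | not φ ih => exact ih
  | and φ ψ ih1 ih2 => exact ih1.union ih2
  | or φ ψ ih1 ih2 => exact ih1.union ih2
  | ex x φ ih => exact ih
  | all x φ ih => exact ih

/-- `k`-ary queries over the set `A`, definable in the algebra. -/
def KD (A : Inst Rel ar C → Set C) (k : ℕ) (Q : Inst Rel ar C → (Fin k → C) → Prop) : Prop :=
  ∃ e : RA Rel ar C k, ∀ I s, s ∈ RA.eval I e ↔
    ∃ a : Fin k → C, (∀ i, a i ∈ A I) ∧ Q I a ∧ s = fun i => some (a i)

theorem some_comp_inj {k : ℕ} {a b : Fin k → C}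
    (h : (fun i => some (a i)) = fun i => some (b i)) : a = b :=
  funext fun i => Option.some.inj (congrFun h i)

section
variable {A : Inst Rel ar C → Set C} {k : ℕ} {Q R : Inst Rel ar C → (Fin k → C) → Prop}

theorem KD.congr (h : KD A k Q) (hQ : ∀ I a, (∀ i, a i ∈ A I) → (Q I a ↔ R I a)) : KD A k R := by
  obtain ⟨e, he⟩ := h
  refine ⟨e, fun I s => (he I s).trans (exists_congr fun a => ?_)⟩
  constructor
  · rintro ⟨h1, h2, h3⟩; exact ⟨h1, (hQ I a h1).1 h2, h3⟩
  · rintro ⟨h1, h2, h3⟩; exact ⟨h1, (hQ I a h1).2 h2, h3⟩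

theorem KD.tru (hA : UD A) (k : ℕ) : KD A k (fun _ _ => True) := by
  obtain ⟨eA, hA⟩ := hA
  induction k with
  | zero =>
    refine ⟨.proj Fin.elim0 .nsing, fun I s => ?_⟩
    constructor
    · intro _
      exact ⟨Fin.elim0, fun i => i.elim0, trivial, Subsingleton.elim _ _⟩
    · intro _
      exact ⟨fun _ => none, rfl, fun i => i.elim0⟩
  | succ k ih =>
    obtain ⟨e, he⟩ := ih
    refine ⟨.prod e eA, fun I s => ?_⟩
    constructor
    · rintro ⟨t, ht, t', ht', rfl⟩
      obtain ⟨a, ha, -, rfl⟩ := (he _ _).1 ht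
      obtain ⟨b, hb, rfl⟩ := (hA _ _).1 ht'
      refine ⟨Fin.append a fun _ => b, fun i => ?_, trivial, funext fun i => ?_⟩
      · induction i using Fin.addCases with
        | left i => rw [Fin.append_left]; exact ha i
        | right i => rw [Fin.append_right]; exact hb
      · induction i using Fin.addCases with
        | left i => rw [Fin.append_left, Fin.append_left]
        | right i => rw [Fin.append_right, Fin.append_right]
    · rintro ⟨a, ha, -, rfl⟩
      refine ⟨fun i => some (a (Fin.castAdd 1 i)), (he _ _).2 ⟨_, fun i => ha _, trivial, rfl⟩,
        fun i => some (a (Fin.natAdd k i)), (hA _ _).2 ⟨a (Fin.natAdd k 0), ha _, ?_⟩,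
        funext fun i => ?_⟩
      · funext i; rw [Subsingleton.elim i 0]
      · induction i using Fin.addCases with
        | left i => rw [Fin.append_left]
        | right i => rw [Fin.append_right]

theorem KD.diff (h : KD A k Q) (h' : KD A k R) : KD A k (fun I a => Q I a ∧ ¬ R I a) := by
  obtain ⟨e, he⟩ := h
  obtain ⟨f, hf⟩ := h'
  refine ⟨.diff e f, fun I s => ?_⟩
  have : s ∈ RA.eval I (.diff e f) ↔ s ∈ RA.eval I e ∧ ¬ s ∈ RA.eval I f := Iff.rfl
  rw [this, he, hf]
  constructor
  · rintro ⟨⟨a, h1, h2, rfl⟩, h3⟩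
    exact ⟨a, h1, ⟨h2, fun h => h3 ⟨a, h1, h, rfl⟩⟩, rfl⟩
  · rintro ⟨a, h1, ⟨h2, h3⟩, rfl⟩
    refine ⟨⟨a, h1, h2, rfl⟩, ?_⟩
    rintro ⟨b, _, h4, h5⟩
    obtain rfl := some_comp_inj h5
    exact h3 h4

theorem KD.or (h : KD A k Q) (h' : KD A k R) : KD A k (fun I a => Q I a ∨ R I a) := by
  obtain ⟨e, he⟩ := h
  obtain ⟨f, hf⟩ := h'
  refine ⟨.union e f, fun I s => ?_⟩
  have : s ∈ RA.eval I (.union e f) ↔ s ∈ RA.eval I e ∨ s ∈ RA.eval I f := Iff.rfl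
  rw [this, he, hf]
  constructor
  · rintro (⟨a, h1, h2, rfl⟩ | ⟨a, h1, h2, rfl⟩)
    exacts [⟨a, h1, Or.inl h2, rfl⟩, ⟨a, h1, Or.inr h2, rfl⟩]
  · rintro ⟨a, h1, h2 | h2, rfl⟩
    exacts [Or.inl ⟨a, h1, h2, rfl⟩, Or.inr ⟨a, h1, h2, rfl⟩]

theorem KD.not (hA : UD A) (h : KD A k Q) : KD A k (fun I a => ¬ Q I a) :=
  ((KD.tru hA k).diff h).congr (by simp)

theorem KD.and (h : KD A k Q) (h' : KD A k R) : KD A k (fun I a => Q I a ∧ R I a) :=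
  (h.diff (h.diff h')).congr fun I a _ => by tauto

theorem KD.fls (hA : UD A) (k : ℕ) : KD A k (fun _ _ => False) :=
  ((KD.tru hA k).not hA).congr (by simp)

theorem KD.eqv (hA : UD A) (i j : Fin k) : KD A k (fun _ a => a i = a j) := by
  obtain ⟨e, he⟩ := KD.tru hA k
  refine ⟨.sel i j e, fun I s => ?_⟩
  constructor
  · rintro ⟨hs, d, h1, h2⟩
    obtain ⟨a, ha, -, rfl⟩ := (he _ _).1 hs
    exact ⟨a, ha, Option.some.inj (h1.trans h2.symm), rfl⟩
  · rintro ⟨a, ha, h, rfl⟩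
    exact ⟨(he _ _).2 ⟨a, ha, trivial, rfl⟩, a j, congrArg some h, rfl⟩

theorem KD.eqc (hA : UD A) (i : Fin k) (c : C) : KD A k (fun _ a => a i = c) := by
  obtain ⟨e, he⟩ := KD.tru hA k
  refine ⟨.selc i c e, fun I s => ?_⟩
  constructor
  · rintro ⟨hs, h1⟩
    obtain ⟨a, ha, -, rfl⟩ := (he _ _).1 hs
    exact ⟨a, ha, Option.some.inj h1, rfl⟩
  · rintro ⟨a, ha, h, rfl⟩
    exact ⟨(he _ _).2 ⟨a, ha, trivial, rfl⟩, congrArg some h⟩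

end

/-- Conditions on tuples that can be expressed by the selections of the algebra. -/
def Filt (Rel : Type) (ar : Rel → ℕ) {C : Type} {m : ℕ} (P : (Fin m → Option C) → Prop) : Prop :=
  ∀ e : RA Rel ar C m, ∃ e' : RA Rel ar C m, ∀ I s, s ∈ RA.eval I e' ↔ s ∈ RA.eval I e ∧ P s

theorem Filt.all {m : ℕ} {ι : Type} [DecidableEq ι] (s : Finset ι)
    (P : ι → (Fin m → Option C) → Prop) (h : ∀ i, Filt Rel ar (P i)) :
    Filt Rel ar (fun w => ∀ i ∈ s, P i w) := by
  induction s using Finset.induction_on with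
  | empty => exact fun e => ⟨e, by simp⟩
  | insert a s _ ih =>
    intro e
    obtain ⟨e1, h1⟩ := ih e
    obtain ⟨e2, h2⟩ := h a e1
    refine ⟨e2, fun I w => ?_⟩
    rw [h2, h1]
    beta_reduce
    rw [Finset.forall_mem_insert]
    tauto

theorem Filt.const {m : ℕ} (i : Fin m) (c : C) :
    Filt Rel ar (fun w : Fin m → Option C => w i = some c) :=
  fun e => ⟨.selc i c e, fun _ _ => Iff.rfl⟩

theorem Filt.eqv {m : ℕ} (i j : Fin m) :
    Filt Rel ar (fun w : Fin m → Option C => ∃ d, w i = some d ∧ w j = some d) :=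
  fun e => ⟨.sel i j e, fun _ _ => Iff.rfl⟩

theorem Filt.null {m : ℕ} (i : Fin m) :
    Filt Rel ar (fun w : Fin m → Option C => w i = none) := by
  refine fun e => ⟨.diff e (.sel i i e), fun I s => ?_⟩
  constructor
  · rintro ⟨h1, h2⟩
    refine ⟨h1, ?_⟩
    by_contra h
    obtain ⟨d, hd⟩ := Option.ne_none_iff_exists'.1 h
    exact h2 ⟨h1, d, hd, hd⟩
  · rintro ⟨h1, h2⟩
    refine ⟨h1, ?_⟩
    rintro ⟨-, d, hd, -⟩
    rw [h2] at hd
    cases hd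

section
variable [Nonempty C]

/-- Extend a finite assignment to a total one. -/
noncomputable def ext {k : ℕ} (a : Fin k → C) : ℕ → C :=
  fun x => if h : x < k then a ⟨x, h⟩ else Classical.arbitrary C

theorem ext_lt {k : ℕ} (a : Fin k → C) {x : ℕ} (h : x < k) : ext a x = a ⟨x, h⟩ := by
  simp [ext, h]

theorem ext_update {k : ℕ} (a : Fin k → C) {x : ℕ} (h : x < k) (d : C) :
    ext (Function.update a ⟨x, h⟩ d) = Function.update (ext a) x d := by
  funext y
  by_cases hy : y = x
  · subst hy; rw [ext_lt _ h]; simp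
  · rw [Function.update_of_ne hy]
    unfold ext
    split_ifs with h'
    · rw [Function.update_of_ne]
      intro h2; exact hy (congrArg Fin.val h2)
    · rfl

theorem KD.atom {A : Inst Rel ar C → Set C} (hA : UD A) (k : ℕ) (P : Rel)
    (ts : Fin (ar P) → Term (folSig Rel ar C) ℕ) (hts : ∀ i, ∀ x ∈ (ts i).vars, x < k) :
    KD A k (fun I a => (fun i => tv (ext a) (ts i)) ∈ I P) := by
  obtain ⟨e, he⟩ := KD.tru hA k
  have key : ∀ j : Fin (ar P), ∃ D : (Fin (k + ar P) → Option C) → Prop, Filt Rel ar D ∧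
      ∀ (a : Fin k → C) (r : Fin (ar P) → Option C),
        D (Fin.append (fun i => some (a i)) r) ↔ r j = tv (ext a) (ts j) := by
    intro j
    cases htj : ts j with
    | const c =>
      refine ⟨_, Filt.const (Fin.natAdd k j) c, fun a r => ?_⟩
      rw [Fin.append_right]; rfl
    | null =>
      refine ⟨_, Filt.null (Fin.natAdd k j), fun a r => ?_⟩
      rw [Fin.append_right]; rfl
    | var x =>
      have hx : x < k := hts j x (by rw [htj]; simp [Term.vars])
      refine ⟨_, Filt.eqv (Fin.castAdd (ar P) ⟨x, hx⟩) (Fin.natAdd k j), fun a r => ?_⟩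
      rw [Fin.append_right, Fin.append_left]
      simp [tv, ext_lt a hx]
  choose D hD1 hD2 using key
  obtain ⟨e', he'⟩ := Filt.all Finset.univ D hD1 (.prod e (.rel P))
  refine ⟨.proj (Fin.castAdd (ar P)) e', fun I s => ?_⟩
  constructor
  · rintro ⟨w, hw, hs⟩
    obtain ⟨⟨t, ht, r, hr, rfl⟩, hD⟩ := (he' _ _).1 hw
    obtain ⟨a, ha, -, rfl⟩ := (he _ _).1 ht
    refine ⟨a, ha, ?_, funext fun i => ?_⟩
    · have : r = fun i => tv (ext a) (ts i) :=
        funext fun j => (hD2 j a r).1 (hD j (Finset.mem_univ _))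
      subst this; exact hr
    · rw [hs i, Fin.append_left]
  · rintro ⟨a, ha, hP, rfl⟩
    refine ⟨_, (he' _ _).2 ⟨⟨_, (he _ _).2 ⟨a, ha, trivial, rfl⟩, _, hP, rfl⟩, fun j _ => ?_⟩,
      fun i => ?_⟩
    · exact (hD2 j a _).2 rfl
    · rw [Fin.append_left]

theorem KD.ex {A : Inst Rel ar C → Set C} (hA : UD A) {k : ℕ}
    {Q : Inst Rel ar C → (Fin k → C) → Prop} (h : KD A k Q) (x : Fin k) :
    KD A k (fun I a => ∃ d ∈ A I, Q I (Function.update a x d)) := by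
  obtain ⟨e, he⟩ := h
  obtain ⟨eA, hA⟩ := hA
  refine ⟨.proj (fun i => if i = x then Fin.natAdd k 0 else Fin.castAdd 1 i) (.prod e eA),
    fun I s => ?_⟩
  constructor
  · rintro ⟨w, ⟨t, ht, t', ht', rfl⟩, hs⟩
    obtain ⟨a, ha, hQ, rfl⟩ := (he _ _).1 ht
    obtain ⟨b, hb, rfl⟩ := (hA _ _).1 ht'
    refine ⟨Function.update a x b, fun i => ?_, ⟨a x, ha x, by simpa using hQ⟩, funext fun i => ?_⟩
    · by_cases hi : i = x
      · subst hi; simpa using hb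
      · rw [Function.update_of_ne hi]; exact ha i
    · rw [hs i]
      by_cases hi : i = x
      · subst hi; beta_reduce; rw [if_pos rfl, Fin.append_right, Function.update_self]
      · beta_reduce; rw [if_neg hi, Fin.append_left, Function.update_of_ne hi]
  · rintro ⟨a, ha, ⟨d, hd, hQ⟩, rfl⟩
    refine ⟨_, ⟨_, (he _ _).2 ⟨_, fun i => ?_, hQ, rfl⟩, _, (hA _ _).2 ⟨a x, ha x, rfl⟩, rfl⟩,
      fun i => ?_⟩
    · by_cases hi : i = x
      · subst hi; simpa using hd
      · rw [Function.update_of_ne hi]; exact ha i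
    · by_cases hi : i = x
      · subst hi; beta_reduce; rw [if_pos rfl, Fin.append_right]
      · beta_reduce; rw [if_neg hi, Fin.append_left, Function.update_of_ne hi]

theorem KD.main {A : Inst Rel ar C → Set C} (hA : UD A) (k : ℕ)
    (φ : Formula (folSig Rel ar C) ℕ) : bnd k φ → (∃ Z, φ.rr = some Z) →
    (∀ I, adom I φ ⊆ A I) → KD A k (fun I a => S I (ext a) φ) := by
  induction φ with
  | tru => exact fun _ _ _ => KD.tru hA k
  | fls => exact fun _ _ _ => KD.fls hA k
  | atom P ts =>
    intro hb _ _
    exact (KD.atom hA k P ts hb).congr fun I a _ => (S_atom I (ext a) P ts).symm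
  | eq a b =>
    intro hb _ _
    suffices h : KD A k (fun _ c => ntv (ext c) a = ntv (ext c) b) from
      h.congr fun I c _ => (S_eq I (ext c) a b).symm
    cases a with
    | const c =>
      cases b with
      | const d =>
        by_cases h : c = d
        · exact (KD.tru hA k).congr fun _ _ _ => ⟨fun _ => h, fun _ => trivial⟩
        · exact (KD.fls hA k).congr fun _ _ _ => ⟨False.elim, fun h' => h h'⟩
      | var y =>
        have hy : y < k := hb y (by simp [NTerm.vars])
        exact (KD.eqc hA ⟨y, hy⟩ c).congr fun _ a _ => by
          simp only [ntv, ext_lt a hy]; exact eq_comm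
    | var x =>
      have hx : x < k := hb x (by simp [NTerm.vars])
      cases b with
      | const d =>
        exact (KD.eqc hA ⟨x, hx⟩ d).congr fun _ a _ => by
          simp only [ntv, ext_lt a hx]
      | var y =>
        have hy : y < k := hb y (by simp [NTerm.vars])
        exact (KD.eqv hA ⟨x, hx⟩ ⟨y, hy⟩).congr fun _ a _ => by
          simp only [ntv, ext_lt a hx, ext_lt a hy]
  | not φ ih =>
    rintro hb ⟨Z, hZ⟩ hs
    refine KD.not hA (ih hb ?_ hs)
    cases h1 : φ.rr <;> simp [Formula.rr, h1] at hZ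
    exact ⟨_, rfl⟩
  | and φ ψ ih1 ih2 =>
    rintro hb ⟨Z, hZ⟩ hs
    obtain ⟨Z1, Z2, h1, h2, -⟩ := rr_and hZ
    exact (ih1 hb.1 ⟨_, h1⟩ fun I x hx => hs I (Or.inl hx)).and
      (ih2 hb.2 ⟨_, h2⟩ fun I x hx => hs I (Or.inr hx))
  | or φ ψ ih1 ih2 =>
    rintro hb ⟨Z, hZ⟩ hs
    obtain ⟨Z1, Z2, h1, h2, -⟩ := rr_or hZ
    exact (ih1 hb.1 ⟨_, h1⟩ fun I x hx => hs I (Or.inl hx)).or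
      (ih2 hb.2 ⟨_, h2⟩ fun I x hx => hs I (Or.inr hx))
  | ex x φ ih =>
    rintro ⟨hx, hb⟩ ⟨Z, hZ⟩ hs
    obtain ⟨Z1, h1, hxZ, -⟩ := rr_ex hZ
    refine (KD.ex hA (ih hb ⟨_, h1⟩ hs) ⟨x, hx⟩).congr fun I a _ => ?_
    rw [S_ex]
    constructor
    · rintro ⟨d, _, h⟩
      rw [ext_update] at h
      exact ⟨d, h⟩
    · rintro ⟨d, h⟩
      refine ⟨d, hs I ?_, by rw [ext_update]; exact h⟩
      have := range_adom I φ _ _ h1 h x hxZ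
      rwa [Function.update_self] at this
  | all x φ ih => rintro _ ⟨Z, hZ⟩; simp [Formula.rr] at hZ

theorem part_two (φ : Formula (folSig Rel ar C) ℕ) (hf : φ.freeVars = ∅) (hs : φ.SafeRange) :
      ∃ (n : ℕ) (e : RA Rel ar C n), ∀ I : Inst Rel ar C,
        (Formula.Sat (folRep I) (fun _ => none) φ ↔ RA.eval I e ≠ ∅) := by
  obtain ⟨k, hk⟩ := exists_bnd φ
  let c : C := Classical.arbitrary C
  obtain ⟨e, he⟩ := KD.main ((UD.adom φ).union (UD.single c)) k φ hk ⟨_, hs⟩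
    fun I x hx => Or.inl hx
  refine ⟨k, e, fun I => ?_⟩
  have hc : ∀ α : ℕ → C, S I α φ ↔ Formula.Sat (folRep I) (fun _ => none) φ := fun α =>
    sat_congr (folRep I) φ _ _ (by simp [hf])
  rw [← Set.nonempty_iff_ne_empty]
  constructor
  · intro h
    exact ⟨_, (he I _).2 ⟨fun _ => c, fun _ => Or.inr rfl, (hc _).2 h, rfl⟩⟩
  · rintro ⟨s, h⟩
    obtain ⟨a, -, h, -⟩ := (he I s).1 h
    exact (hc _).1 h

end


end CoddAux

/-- Extension of Codd's Theorem: the relational algebra with null values nRA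
and the domain independent (safe-range) fragment of FOLe with the Standard
Name Assumption are equally expressive.
(i) For every nRA expression `e` of arity `n` and every `n`-tuple `t` over
`C ∪ {N}` there is a closed safe-range FOLe formula (namely `Ω(e,t)`) holding
in the FOLe representation of a database instance exactly when
`t ∈ eval_I(e)`; and (ii) for every safe-range closed FOLe formula `φ` there
is an nRA expression whose evaluation is nonempty exactly over the instances
whose FOLe representation satisfies `φ`. -/
theorem extension_of_Codd_theorem {Rel C : Type} {ar : Rel → ℕ} [Nonempty C] :
    (∀ (n : ℕ) (e : RA Rel ar C n) (t : Fin n → Option C),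
      ∃ φ : Formula (folSig Rel ar C) ℕ,
        φ.freeVars = ∅ ∧ φ.SafeRange ∧
        ∀ I : Inst Rel ar C,
          (t ∈ RA.eval I e ↔ Formula.Sat (folRep I) (fun _ => none) φ)) ∧
    (∀ φ : Formula (folSig Rel ar C) ℕ,
      φ.freeVars = ∅ → φ.SafeRange →
      ∃ (n : ℕ) (e : RA Rel ar C n), ∀ I : Inst Rel ar C,
        (Formula.Sat (folRep I) (fun _ => none) φ ↔ RA.eval I e ≠ ∅)) := by
  exact ⟨CoddAux.part_one, CoddAux.part_two⟩
end

section
/- For every expression ẽ of the standard relational algebra RA over the decomposed relational schema ~R there is an expression e of the relational algebra with null values nRA over R such that, for every database instance I, the evaluation of ẽ over the decomposed representation of I equals the evaluation of e over the null-value representation of I. -/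
/-! ## Standard relational algebra over null-free tuples -/

/-- Expressions of the standard relational algebra RA (no null singleton). -/
inductive SRA (Rel : Type) (ar : Rel → ℕ) (C : Type) : ℕ → Type where
  | rel : (R : Rel) → SRA Rel ar C (ar R)
  | csing : C → SRA Rel ar C 1
  | selc : {n : ℕ} → Fin n → C → SRA Rel ar C n → SRA Rel ar C n
  | sel : {n : ℕ} → Fin n → Fin n → SRA Rel ar C n → SRA Rel ar C n
  | proj : {n k : ℕ} → (Fin k → Fin n) → SRA Rel ar C n → SRA Rel ar C k
  | prod : {n m : ℕ} → SRA Rel ar C n → SRA Rel ar C m → SRA Rel ar C (n + m)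
  | union : {n : ℕ} → SRA Rel ar C n → SRA Rel ar C n → SRA Rel ar C n
  | diff : {n : ℕ} → SRA Rel ar C n → SRA Rel ar C n → SRA Rel ar C n

/-- Standard (null-free) evaluation of RA expressions over an instance
assigning sets of total tuples over `C`. -/
def SRA.eval {Rel : Type} {ar : Rel → ℕ} {C : Type}
    (J : (R : Rel) → Set (Fin (ar R) → C)) :
    {n : ℕ} → SRA Rel ar C n → Set (Fin n → C)
  | _, .rel R => J R
  | _, .csing v => {fun _ => v}
  | _, .selc i v e => {s | s ∈ SRA.eval J e ∧ s i = v}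
  | _, .sel i j e => {s | s ∈ SRA.eval J e ∧ s i = s j}
  | _, .proj p e => {s | ∃ s' ∈ SRA.eval J e, ∀ j, s j = s' (p j)}
  | _, .prod e₁ e₂ =>
      {s | ∃ t ∈ SRA.eval J e₁, ∃ t' ∈ SRA.eval J e₂, s = Fin.append t t'}
  | _, .union e₁ e₂ => SRA.eval J e₁ ∪ SRA.eval J e₂
  | _, .diff e₁ e₂ => SRA.eval J e₁ \ SRA.eval J e₂

/-! ## The decomposed schema and the decomposed representation -/

/-- Relation symbols of the decomposed schema `~R`: pairs of a relation
symbol `R` and a subset `A` of its positions. -/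
def DRel (Rel : Type) (ar : Rel → ℕ) : Type := Σ R : Rel, Finset (Fin (ar R))

/-- Arity of a decomposed relation symbol `~R_A` is `|A|`. -/
def dar (Rel : Type) (ar : Rel → ℕ) : DRel Rel ar → ℕ := fun RA' => RA'.2.card

/-- The decomposed representation of an instance: `~R_A` holds the null-free
restrictions to `A` (in ascending positional order) of those tuples of `R`
whose set of non-null positions is exactly `A`. -/
def decompInst {Rel : Type} {ar : Rel → ℕ} {C : Type} (I : Inst Rel ar C) :
    (R' : DRel Rel ar) → Set (Fin (dar Rel ar R') → C) :=
  fun R' =>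
    { f | ∃ τ ∈ I R'.1, (∀ j, τ j ≠ none ↔ j ∈ R'.2) ∧
        ∀ i, τ ↑(R'.2.orderIsoOfFin rfl i) = some (f i) }

/-- Selecting the tuples whose non-null positions within `S` are those of `A`. -/
theorem exists_null_filter {Rel C : Type} {ar : Rel → ℕ} {n : ℕ}
    (e : RA Rel ar C n) (A S : Finset (Fin n)) :
    ∃ e' : RA Rel ar C n, ∀ I : Inst Rel ar C,
      RA.eval I e' = {s | s ∈ RA.eval I e ∧ ∀ j ∈ S, (s j ≠ none ↔ j ∈ A)} := by
  classical
  induction S using Finset.induction_on with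
  | empty => exact ⟨e, fun I => by simp⟩
  | insert a S ha ih =>
    obtain ⟨e', h⟩ := ih
    by_cases hA : a ∈ A
    · refine ⟨.sel a a e', fun I => ?_⟩
      ext s
      simp only [RA.eval, h I, Set.mem_setOf_eq, Finset.forall_mem_insert, hA, iff_true,
        and_self, Option.ne_none_iff_exists']
      tauto
    · refine ⟨.diff e' (.sel a a e'), fun I => ?_⟩
      ext s
      simp only [RA.eval, h I, Set.mem_setOf_eq, Set.mem_diff, Finset.forall_mem_insert, hA,
        iff_false, and_self, Option.ne_none_iff_exists']
      tauto

/-- For every standard relational algebra expression over the decomposed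
schema there is an nRA expression over the original schema whose evaluation
over the null-value representation of any instance coincides (via the obvious
identification of null-free tuples) with the evaluation of the former over
the decomposed representation. -/
theorem decomposed_RA_to_nRA {Rel C : Type} {ar : Rel → ℕ} {n : ℕ}
    (et : SRA (DRel Rel ar) (dar Rel ar) C n) :
    ∃ e : RA Rel ar C n, ∀ I : Inst Rel ar C,
      (fun f : Fin n → C => (fun i => some (f i) : Fin n → Option C)) ''
          SRA.eval (decompInst I) et
        = RA.eval I e := by
  induction et with
  | rel R' =>
    obtain ⟨e, he⟩ := exists_null_filter (C := C) (RA.rel (ar := ar) R'.1) R'.2 Finset.univ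
    refine ⟨.proj (fun i => (R'.2.orderIsoOfFin rfl i : Fin (ar R'.1))) e, fun I => ?_⟩
    ext s
    simp only [RA.eval, SRA.eval, he I, decompInst, Set.mem_image, Set.mem_setOf_eq,
      Finset.mem_univ, true_imp_iff]
    constructor
    · rintro ⟨f, ⟨τ, h1, h2, h3⟩, rfl⟩
      exact ⟨τ, ⟨h1, h2⟩, fun j => (h3 j).symm⟩
    · rintro ⟨τ, ⟨h1, h2⟩, h3⟩
      have h4 : ∀ i, ∃ c, τ (R'.2.orderIsoOfFin rfl i : Fin (ar R'.1)) = some c := fun i =>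
        Option.ne_none_iff_exists'.1 ((h2 _).2 (R'.2.orderIsoOfFin rfl i).2)
      choose f hf using h4
      exact ⟨f, ⟨τ, h1, h2, hf⟩, funext fun j => ((h3 j).trans (hf j)).symm⟩
  | csing v => exact ⟨.csing v, fun I => by simp [RA.eval, SRA.eval]⟩
  | selc i v e ih =>
    obtain ⟨e', h⟩ := ih
    refine ⟨.selc i v e', fun I => ?_⟩
    ext s
    simp only [RA.eval, SRA.eval, ← h I, Set.mem_image, Set.mem_setOf_eq]
    constructor
    · rintro ⟨f, ⟨h1, h2⟩, rfl⟩
      exact ⟨⟨f, h1, rfl⟩, by simp [h2]⟩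
    · rintro ⟨⟨f, h1, rfl⟩, h2⟩
      exact ⟨f, ⟨h1, by simpa using h2⟩, rfl⟩
  | sel i j e ih =>
    obtain ⟨e', h⟩ := ih
    refine ⟨.sel i j e', fun I => ?_⟩
    ext s
    simp only [RA.eval, SRA.eval, ← h I, Set.mem_image, Set.mem_setOf_eq]
    constructor
    · rintro ⟨f, ⟨h1, h2⟩, rfl⟩
      exact ⟨⟨f, h1, rfl⟩, f i, rfl, by simp [h2]⟩
    · rintro ⟨⟨f, h1, rfl⟩, d, h2, h3⟩
      exact ⟨f, ⟨h1, Option.some.inj (h2.trans h3.symm)⟩, rfl⟩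
  | proj p e ih =>
    obtain ⟨e', h⟩ := ih
    refine ⟨.proj p e', fun I => ?_⟩
    ext s
    simp only [RA.eval, SRA.eval, ← h I, Set.mem_image, Set.mem_setOf_eq]
    constructor
    · rintro ⟨f, ⟨g, h1, h2⟩, rfl⟩
      exact ⟨_, ⟨g, h1, rfl⟩, fun j => by simp [h2]⟩
    · rintro ⟨_, ⟨g, h1, rfl⟩, h2⟩
      exact ⟨fun j => g (p j), ⟨g, h1, fun _ => rfl⟩, funext fun j => (h2 j).symm⟩
  | @prod n m e₁ e₂ ih₁ ih₂ =>
    obtain ⟨e₁', h₁⟩ := ih₁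
    obtain ⟨e₂', h₂⟩ := ih₂
    have key : ∀ (t : Fin n → C) (t' : Fin m → C),
        (fun i => some (Fin.append t t' i)) =
          Fin.append (fun i => some (t i)) (fun i => some (t' i)) := by
      intro t t'
      funext i
      refine Fin.addCases (fun i => ?_) (fun i => ?_) i <;> simp
    refine ⟨.prod e₁' e₂', fun I => ?_⟩
    ext s
    simp only [RA.eval, SRA.eval, ← h₁ I, ← h₂ I, Set.mem_image, Set.mem_setOf_eq]
    constructor
    · rintro ⟨f, ⟨t, ht, t', ht', rfl⟩, rfl⟩
      exact ⟨_, ⟨t, ht, rfl⟩, _, ⟨t', ht', rfl⟩, key t t'⟩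
    · rintro ⟨_, ⟨t, ht, rfl⟩, _, ⟨t', ht', rfl⟩, rfl⟩
      exact ⟨_, ⟨t, ht, t', ht', rfl⟩, key t t'⟩
  | union e₁ e₂ ih₁ ih₂ =>
    obtain ⟨e₁', h₁⟩ := ih₁
    obtain ⟨e₂', h₂⟩ := ih₂
    exact ⟨.union e₁' e₂', fun I => by
      simp only [RA.eval, SRA.eval, ← h₁ I, ← h₂ I, Set.image_union]⟩
  | diff e₁ e₂ ih₁ ih₂ =>
    obtain ⟨e₁', h₁⟩ := ih₁
    obtain ⟨e₂', h₂⟩ := ih₂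
    refine ⟨.diff e₁' e₂', fun I => ?_⟩
    simp only [RA.eval, SRA.eval, ← h₁ I, ← h₂ I]
    refine Set.image_diff ?_ _ _
    intro f g hfg
    funext i
    exact Option.some.inj (congrFun hfg i)
end
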